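/- arXiv:2206.04842 — 6 statements merged into one kernel-verified Lean document; each statement's English description precedes it below -/
import Mathlib

section
/- Let a ≥ 5 and let d be a positive integer with d + h_d^{(a)} ≥ a·2^{a+3} − a. Let U denote the set of positive integers congruent modulo 2(d + h_d^{(a)}) either to a or to (d + h_d^{(a)}) + 2^j·a for some 1 ≤ j ≤ a−1. Then for all n ≥ 1, ρ(U; n + h_n^{(a)}) ≥ Q_d^{(a,-,-)}(n). -/
/-- `q_d^{(a)}(n)`: the number of partitions of `n` into parts of size at least `a`
such that successive parts differ by at least `d`. -/
noncomputable def gapCount (d a n : ℕ) : ℕ :=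
  Nat.card {p : n.Partition //
    (∀ x ∈ p.parts, a ≤ x) ∧
    List.Chain' (fun x y => x + d ≤ y) (p.parts.sort (· ≤ ·))}

/-- `Q_d^{(a)}(n)`: the number of partitions of `n` into parts congruent to `a` or `-a`
modulo `d + 3`. -/
noncomputable def congCount (d a n : ℕ) : ℕ :=
  Nat.card {p : n.Partition //
    ∀ x ∈ p.parts, x ≡ a [MOD d + 3] ∨ x + a ≡ 0 [MOD d + 3]}

/-- `Q_d^{(a,-)}(n)`: as `congCount`, but no part equals `d + 3 - a`. -/
noncomputable def congMinusCount (d a n : ℕ) : ℕ :=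
  Nat.card {p : n.Partition //
    (∀ x ∈ p.parts, x ≡ a [MOD d + 3] ∨ x + a ≡ 0 [MOD d + 3]) ∧
    ∀ x ∈ p.parts, x ≠ d + 3 - a}

/-- `Q_d^{(a,-,-)}(n)`: as `congCount`, but no part equals `a` or `d + 3 - a`. -/
noncomputable def congMinusMinusCount (d a n : ℕ) : ℕ :=
  Nat.card {p : n.Partition //
    (∀ x ∈ p.parts, x ≡ a [MOD d + 3] ∨ x + a ≡ 0 [MOD d + 3]) ∧
    (∀ x ∈ p.parts, x ≠ a) ∧ ∀ x ∈ p.parts, x ≠ d + 3 - a}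

/-- `ρ(R; n)`: the number of partitions of `n` all of whose parts lie in `R`. -/
noncomputable def rhoCount (R : Set ℕ) (n : ℕ) : ℕ :=
  Nat.card {p : n.Partition // ∀ x ∈ p.parts, x ∈ R}

/-- `h_n^{(a)}`: the least nonnegative residue of `-n` modulo `a`,
so that `n + negRes n a = a * ⌈n/a⌉`. -/
def negRes (n a : ℕ) : ℕ := (a - n % a) % a

/-- `⌈d/a⌉` for natural numbers. -/
def cdiv (d a : ℕ) : ℕ := (d + a - 1) / a

/-!
An injection `f : S → T` that increases no part and takes multiples of `a` as values carries
partitions of `n` into parts from `S` to multisets of multiples of `a` with sum at most `n`;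
topping these up with copies of `a ∈ T` gives partitions of any larger multiple of `a`. The number
of copies of `a` that were added can be recovered, because `n` is known and at most one part of `S`
is sent to `a`.

Here `S` consists of the integers `x ≥ M := d + 3` congruent to `±a` modulo `M`. The multiples
of `M / 2` separate its elements, so that `x ↦ ⌊2 * x / M⌋ - 2` numbers them, and `f` sends the
`i`-th element of `S` to the `i`-th element of `T`. The set `T` has `a` elements in each period of
length `2 * D`, where `D := d + negRes d a ≤ M + a - 4`, and `S` has four in each period of length
`2 * M`; this is why `f` increases no part as soon as `4 ≤ a`.
-/

section Multiset

variable {α β : Type*} {S : Set α} {f : α → β}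

theorem multiset_eq_of_map_eq_of_injOn (hf : Set.InjOn f S) {p q : Multiset α}
    (hp : ∀ x ∈ p, x ∈ S) (hq : ∀ x ∈ q, x ∈ S) (h : p.map f = q.map f) : p = q := by
  lift p to Multiset S using hp
  lift q to Multiset S using hq
  simp only [Multiset.map_map] at h
  rw [Multiset.map_injective hf.injective h]

theorem multiset_eq_of_map_add_replicate_eq [AddCommMonoid α] [PartialOrder α]
    [IsOrderedCancelAddMonoid α] (hf : Set.InjOn f S) (hS : ∀ x ∈ S, 0 < x) {p q : Multiset α}
    (hp : ∀ x ∈ p, x ∈ S) (hq : ∀ x ∈ q, x ∈ S) (hsum : p.sum = q.sum) {b : β} {k l : ℕ}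
    (h : p.map f + Multiset.replicate k b = q.map f + Multiset.replicate l b) : p = q := by
  wlog hkl : k ≤ l generalizing p q k l
  · exact (this hq hp hsum.symm h.symm (le_of_not_ge hkl)).symm
  obtain ⟨m, rfl⟩ := Nat.exists_eq_add_of_le' hkl
  rw [Multiset.replicate_add, ← add_assoc] at h
  replace h : p.map f = q.map f + Multiset.replicate m b := add_right_cancel h
  rcases eq_or_ne m 0 with rfl | hm
  · rw [Multiset.replicate_zero, add_zero] at h
    exact multiset_eq_of_map_eq_of_injOn hf hp hq h
  have hb : b ∈ p.map f := h ▸ Multiset.mem_add.2 (.inr (Multiset.mem_replicate.2 ⟨hm, rfl⟩))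
  obtain ⟨x, hx, rfl⟩ := Multiset.mem_map.1 hb
  have hpq : p = q + Multiset.replicate m x := by
    refine multiset_eq_of_map_eq_of_injOn hf hp (fun y hy => ?_)
      (by rw [h, Multiset.map_add, Multiset.map_replicate])
    rcases Multiset.mem_add.1 hy with hy | hy
    · exact hq y hy
    · exact Multiset.eq_of_mem_replicate hy ▸ hp x hx
  have hmx : m • x = 0 := by
    rwa [hpq, Multiset.sum_add, Multiset.sum_replicate, add_eq_left] at hsum
  exact absurd hmx (nsmul_pos (hS x (hp x hx)) hm).ne'

/-- The multiset `s` with as many copies of `a` added as fit without its sum exceeding `N`: the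
completion of the image of a partition to a partition of `N`. -/
def padWith (a N : ℕ) (s : Multiset ℕ) : Multiset ℕ :=
  s + Multiset.replicate ((N - s.sum) / a) a

theorem sum_padWith {a N : ℕ} {s : Multiset ℕ} (hN : a ∣ N) (hs : ∀ x ∈ s, a ∣ x)
    (hsN : s.sum ≤ N) : (padWith a N s).sum = N := by
  rw [padWith, Multiset.sum_add, Multiset.sum_replicate, smul_eq_mul,
    Nat.div_mul_cancel (Nat.dvd_sub hN (Multiset.dvd_sum hs)), Nat.add_sub_cancel' hsN]

theorem forall_mem_padWith {a N : ℕ} {s : Multiset ℕ} {T : Set ℕ} (ha : a ∈ T)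
    (hs : ∀ x ∈ s, x ∈ T) : ∀ x ∈ padWith a N s, x ∈ T := fun x hx =>
  (Multiset.mem_add.1 hx).elim (hs x) fun h => Multiset.eq_of_mem_replicate h ▸ ha

end Multiset

theorem rhoCount_le_rhoCount_of_injOn {S T : Set ℕ} {f : ℕ → ℕ} {a n N : ℕ}
    (hmaps : Set.MapsTo f S T) (hinj : Set.InjOn f S) (hle : ∀ x ∈ S, f x ≤ x)
    (hdvd : ∀ x ∈ S, a ∣ f x) (ha : a ∈ T) (hT : ∀ y ∈ T, 0 < y) (hnN : n ≤ N) (hN : a ∣ N) :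
    rhoCount S n ≤ rhoCount T N := by
  have hmem (p : n.Partition) (hp : ∀ x ∈ p.parts, x ∈ S) :
      ∀ y ∈ padWith a N (p.parts.map f), y ∈ T :=
    forall_mem_padWith ha (Multiset.forall_mem_map_iff.2 fun x hx => hmaps (hp x hx))
  have hsum (p : n.Partition) (hp : ∀ x ∈ p.parts, x ∈ S) :
      (padWith a N (p.parts.map f)).sum = N := by
    refine sum_padWith hN (Multiset.forall_mem_map_iff.2 fun x hx => hdvd x (hp x hx)) ?_
    calc (p.parts.map f).sum ≤ (p.parts.map id).sum :=
          Multiset.sum_map_le_sum_map f id fun x hx => hle x (hp x hx)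
      _ = n := by rw [Multiset.map_id, p.parts_sum]
      _ ≤ N := hnN
  refine Nat.card_le_card_of_injective
    (fun p => ⟨⟨padWith a N (p.1.parts.map f), fun hy => hT _ (hmem p.1 p.2 _ hy),
      hsum p.1 p.2⟩, hmem p.1 p.2⟩) ?_
  rintro ⟨p, hp⟩ ⟨q, hq⟩ hpq
  have hS : ∀ x ∈ S, 0 < x := fun x hx => (hT _ (hmaps hx)).trans_le (hle x hx)
  exact Subtype.ext (Nat.Partition.ext (multiset_eq_of_map_add_replicate_eq hinj hS hp hq
    (p.parts_sum.trans q.parts_sum.symm) (congrArg (fun r => r.1.parts) hpq)))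

theorem dvd_add_negRes {a : ℕ} (n : ℕ) (ha : 0 < a) : a ∣ n + negRes n a := by
  rw [Nat.dvd_iff_mod_eq_zero, negRes, Nat.add_mod_mod, ← Nat.mod_add_mod,
    Nat.add_sub_cancel' (Nat.mod_lt n ha).le, Nat.mod_self]

theorem negRes_lt {a : ℕ} (n : ℕ) (ha : 0 < a) : negRes n a < a := Nat.mod_lt _ ha

section SignedResidues

variable {M a x : ℕ}

/-- The integers congruent to `±a` modulo `M` that are at least `M`. For `0 < a < M` the bound
excludes exactly the two smallest positive ones, `a` and `M - a`. -/
def signedResidues (M a : ℕ) : Set ℕ :=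
  {x | M ≤ x ∧ (x ≡ a [MOD M] ∨ x + a ≡ 0 [MOD M])}

theorem mem_signedResidues_iff (ha : 0 < a) (haM : a < M) :
    x ∈ signedResidues M a ↔
      (x ≡ a [MOD M] ∨ x + a ≡ 0 [MOD M]) ∧ x ≠ a ∧ x ≠ M - a := by
  refine ⟨fun ⟨hMx, hx⟩ => ⟨hx, by omega, by omega⟩, fun ⟨hx, hxa, hxMa⟩ => ⟨?_, hx⟩⟩
  by_contra! hxM
  rcases hx with hx | hx
  · exact hxa (hx.eq_of_lt_of_lt hxM haM)
  · obtain ⟨c, hc⟩ := Nat.modEq_zero_iff_dvd.1 hx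
    rcases c with _ | _ | c
    · omega
    · omega
    · have : M * (c + 1 + 1) = M * c + 2 * M := by ring
      omega

theorem congMinusMinusCount_eq_rhoCount {d : ℕ} (ha : 0 < a) (had : a < d + 3) (n : ℕ) :
    congMinusMinusCount d a n = rhoCount (signedResidues (d + 3) a) n :=
  Nat.card_congr (Equiv.subtypeEquivRight fun _ => by
    simp only [mem_signedResidues_iff ha had, forall_and])

theorem two_mul_div_of_modEq (ha : 2 * a < M) (hx : x ≡ a [MOD M]) :
    2 * x / M = 2 * (x / M) := by
  have hmod : x % M = a := Nat.mod_eq_of_modEq hx (by omega)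
  have hx' : 2 * x = 2 * a + M * (2 * (x / M)) := by
    rw [mul_left_comm]
    have := Nat.mod_add_div x M
    omega
  rw [hx', Nat.add_mul_div_left _ _ (by omega), Nat.div_eq_of_lt ha, zero_add]

theorem two_mul_div_of_add_modEq_zero (ha₀ : 0 < a) (ha : 2 * a ≤ M) (hx : x + a ≡ 0 [MOD M]) :
    2 * x / M = 2 * (x / M) + 1 := by
  obtain ⟨c, hc⟩ := Nat.modEq_zero_iff_dvd.1 hx
  obtain ⟨c, rfl⟩ : ∃ b, c = b + 1 := Nat.exists_eq_add_one_of_ne_zero (by rintro rfl; omega)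
  have hx' : x = (M - a) + M * c := by rw [mul_add_one] at hc; omega
  have h2x : 2 * x = (M - 2 * a) + M * (2 * c + 1) := by
    rw [mul_add_one, mul_left_comm]; omega
  rw [h2x, Nat.add_mul_div_left _ _ (by omega), Nat.div_eq_of_lt (by omega), hx',
    Nat.add_mul_div_left _ _ (by omega), Nat.div_eq_of_lt (by omega), zero_add, zero_add]

theorem injOn_two_mul_div (ha₀ : 0 < a) (ha : 2 * a < M) :
    Set.InjOn (fun x => 2 * x / M) {x | x ≡ a [MOD M] ∨ x + a ≡ 0 [MOD M]} := by
  have eq_of_modEq {x y : ℕ} (hdiv : x / M = y / M) (hmod : x ≡ y [MOD M]) : x = y := by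
    rw [← Nat.div_add_mod x M, ← Nat.div_add_mod y M, hdiv, hmod]
  rintro x (hx | hx) y (hy | hy) hxy <;> dsimp only at hxy
  · rw [two_mul_div_of_modEq ha hx, two_mul_div_of_modEq ha hy] at hxy
    exact eq_of_modEq (by omega) (hx.trans hy.symm)
  · rw [two_mul_div_of_modEq ha hx, two_mul_div_of_add_modEq_zero ha₀ ha.le hy] at hxy
    omega
  · rw [two_mul_div_of_add_modEq_zero ha₀ ha.le hx, two_mul_div_of_modEq ha hy] at hxy
    omega
  · rw [two_mul_div_of_add_modEq_zero ha₀ ha.le hx,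
      two_mul_div_of_add_modEq_zero ha₀ ha.le hy] at hxy
    exact eq_of_modEq (by omega) (Nat.ModEq.add_right_cancel' a (hx.trans hy.symm))

/-- The position of `x` in the increasing enumeration of `signedResidues M a`, counted from `0`.
It is the same function of `x` for every `a` with `0 < 2 * a < M`. -/
def signedResidueIndex (M x : ℕ) : ℕ := 2 * x / M - 2

theorem signedResidueIndex_add_two (hM : 0 < M) (hx : M ≤ x) :
    signedResidueIndex M x + 2 = 2 * x / M :=
  Nat.sub_add_cancel ((Nat.le_div_iff_mul_le hM).2 (Nat.mul_le_mul_left 2 hx))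

theorem injOn_signedResidueIndex (ha₀ : 0 < a) (ha : 2 * a < M) :
    Set.InjOn (signedResidueIndex M) (signedResidues M a) := fun x hx y hy hxy =>
  injOn_two_mul_div ha₀ ha hx.2 hy.2 <| by
    simp only [← signedResidueIndex_add_two (show 0 < M by omega) hx.1,
      ← signedResidueIndex_add_two (show 0 < M by omega) hy.1, hxy]

theorem signedResidueIndex_add_two_mul_le (hx : M ≤ x) :
    (signedResidueIndex M x + 2) * M ≤ 2 * x := by
  rcases M.eq_zero_or_pos with rfl | hM
  · simp
  · rw [signedResidueIndex_add_two hM hx]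
    exact Nat.div_mul_le_self _ _

end SignedResidues

section DyadicPart

variable {D a : ℕ}

/-- For `0 < 2 ^ (a - 1) * a ≤ D`, the `i`-th smallest, counted from `0`, of the positive integers
congruent modulo `2 * D` to `a` or to `D + 2 ^ j * a` for some `1 ≤ j ≤ a - 1`. The quotient `i / a`
selects the period and the remainder `i % a` the residue, where remainder `0` stands for `a`. -/
def dyadicPart (D a i : ℕ) : ℕ :=
  (2 * (i / a) + if i % a = 0 then 0 else 1) * D + 2 ^ (i % a) * a

theorem dyadicPart_pos (ha : 0 < a) (i : ℕ) : 0 < dyadicPart D a i :=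
  Nat.add_pos_right _ (by positivity)

theorem dvd_dyadicPart (hD : a ∣ D) (i : ℕ) : a ∣ dyadicPart D a i :=
  dvd_add (hD.mul_left _) (dvd_mul_left a _)

theorem dyadicPart_modEq (ha : 0 < a) (i : ℕ) : dyadicPart D a i ≡ a [MOD 2 * D] ∨
    ∃ j, 1 ≤ j ∧ j ≤ a - 1 ∧ dyadicPart D a i ≡ D + 2 ^ j * a [MOD 2 * D] := by
  have hlt : i % a < a := Nat.mod_lt i ha
  rcases eq_or_ne (i % a) 0 with h | h
  · left
    calc dyadicPart D a i = 2 * D * (i / a) + a := by simp only [dyadicPart, h, if_true]; ring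
      _ ≡ a [MOD 2 * D] := by simp [Nat.ModEq]
  · refine .inr ⟨i % a, by omega, by omega, ?_⟩
    calc dyadicPart D a i = 2 * D * (i / a) + (D + 2 ^ (i % a) * a) := by
          simp only [dyadicPart, h, if_false]; ring
      _ ≡ D + 2 ^ (i % a) * a [MOD 2 * D] := by simp [Nat.ModEq]

theorem two_pow_mul_le_of_lt {j : ℕ} (hD : 2 ^ (a - 1) * a ≤ D) (hja : j < a) :
    2 ^ j * a ≤ D :=
  (Nat.mul_le_mul_right a (Nat.pow_le_pow_right two_pos (Nat.le_sub_one_of_lt hja))).trans hD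

theorem mul_add_inj_of_pos_of_le {c c' r r' : ℕ} (hr : 0 < r) (hrD : r ≤ D) (hr' : 0 < r')
    (hrD' : r' ≤ D) : c * D + r = c' * D + r' ↔ c = c' ∧ r = r' := by
  refine ⟨fun h => ?_, fun ⟨hc, hr⟩ => by rw [hc, hr]⟩
  rcases lt_trichotomy c c' with hc | rfl | hc
  · have := Nat.mul_le_mul_right D hc
    rw [Nat.succ_mul] at this
    omega
  · exact ⟨rfl, Nat.add_left_cancel h⟩
  · have := Nat.mul_le_mul_right D hc
    rw [Nat.succ_mul] at this
    omega

theorem dyadicPart_injective (ha : 0 < a) (hD : 2 ^ (a - 1) * a ≤ D) :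
    Function.Injective (dyadicPart D a) := by
  intro i j h
  have hle (k : ℕ) : 2 ^ (k % a) * a ≤ D := two_pow_mul_le_of_lt hD (Nat.mod_lt k ha)
  obtain ⟨hcoeff, hpow⟩ :=
    (mul_add_inj_of_pos_of_le (by positivity) (hle i) (by positivity) (hle j)).1 h
  have hmod : i % a = j % a := Nat.pow_right_injective le_rfl (Nat.eq_of_mul_eq_mul_right ha hpow)
  have hdiv : i / a = j / a := by rw [hmod] at hcoeff; omega
  rw [← Nat.div_add_mod i a, ← Nat.div_add_mod j a, hmod, hdiv]

theorem eight_mul_le_two_pow_mul (ha : 4 ≤ a) : 8 * a ≤ 2 ^ (a - 1) * a :=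
  Nat.mul_le_mul_right a (Nat.pow_le_pow_right two_pos (show 3 ≤ a - 1 by omega))

theorem four_mul_le_mul_of_add_le {M : ℕ} (ha : 4 ≤ a) (hM : 4 ≤ M) (hDM : D + 4 ≤ M + a) :
    4 * D ≤ a * M := by
  obtain ⟨b, rfl⟩ := Nat.exists_eq_add_of_le ha
  calc 4 * D ≤ 4 * (M + b) := by omega
    _ = 4 * M + b * 4 := by ring
    _ ≤ 4 * M + b * M := by gcongr
    _ = (4 + b) * M := by ring

theorem two_mul_add_two_pow_mul_le {M j : ℕ} (ha : 4 ≤ a) (hD : 2 ^ (a - 1) * a ≤ D)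
    (hDM : D + 4 ≤ M + a) (hj : j ≠ 0) (hja : j < a) :
    2 * (D + 2 ^ j * a) ≤ (j + 2) * M := by
  have hDa : 8 * a ≤ D := (eight_mul_le_two_pow_mul ha).trans hD
  rcases (by omega : j = 1 ∨ j = 2 ∨ 3 ≤ j) with rfl | rfl | hj
  · omega
  · omega
  · have hpow : 2 ^ j * a ≤ D := two_pow_mul_le_of_lt hD hja
    calc 2 * (D + 2 ^ j * a) ≤ 5 * M := by omega
      _ ≤ (j + 2) * M := by gcongr; omega

theorem two_mul_dyadicPart_le {M : ℕ} (ha : 4 ≤ a) (hD : 2 ^ (a - 1) * a ≤ D)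
    (hDM : D + 4 ≤ M + a) (i : ℕ) : 2 * dyadicPart D a i ≤ (i + 2) * M := by
  have hDa : 8 * a ≤ D := (eight_mul_le_two_pow_mul ha).trans hD
  have hperiod : 4 * D ≤ a * M := four_mul_le_mul_of_add_le ha (by omega) hDM
  have hfirst : 2 * ((if i % a = 0 then 0 else 1) * D + 2 ^ (i % a) * a) ≤ (i % a + 2) * M := by
    split_ifs with h
    · rw [h]
      omega
    · rw [one_mul]
      exact two_mul_add_two_pow_mul_le ha hD hDM h (Nat.mod_lt i (by omega))
  calc 2 * dyadicPart D a i
      = i / a * (4 * D) + 2 * ((if i % a = 0 then 0 else 1) * D + 2 ^ (i % a) * a) := by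
        rw [dyadicPart]; ring
    _ ≤ i / a * (a * M) + (i % a + 2) * M := by gcongr
    _ = (a * (i / a) + i % a + 2) * M := by ring
    _ = (i + 2) * M := by rw [Nat.div_add_mod]

end DyadicPart

theorem dyadicPart_signedResidueIndex_le {D M a x : ℕ} (ha : 4 ≤ a) (hD : 2 ^ (a - 1) * a ≤ D)
    (hDM : D + 4 ≤ M + a) (hx : M ≤ x) :
    dyadicPart D a (signedResidueIndex M x) ≤ x :=
  Nat.le_of_mul_le_mul_left ((two_mul_dyadicPart_le ha hD hDM _).trans
    (signedResidueIndex_add_two_mul_le hx)) two_pos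

theorem two_pow_pred_mul_le_mul_two_pow_sub {a : ℕ} (ha : 0 < a) :
    2 ^ (a - 1) * a ≤ a * 2 ^ (a + 3) - a := by
  have hpow : a * 2 ^ (a + 3) = 16 * (2 ^ (a - 1) * a) := by
    rw [show a + 3 = a - 1 + 4 by omega]; ring
  have hle : a ≤ 2 ^ (a - 1) * a := Nat.le_mul_of_pos_left a (by positivity)
  omega

theorem stmt12_general (a d : ℕ) (ha : 4 ≤ a) (hbig : 2 ^ (a - 1) * a ≤ d + negRes d a) (n : ℕ) :
    congMinusMinusCount d a n ≤
      rhoCount {m : ℕ | 0 < m ∧ (m ≡ a [MOD 2 * (d + negRes d a)] ∨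
        ∃ j, 1 ≤ j ∧ j ≤ a - 1 ∧
          m ≡ (d + negRes d a) + 2 ^ j * a [MOD 2 * (d + negRes d a)])}
        (n + negRes n a) := by
  have ha₀ : 0 < a := by omega
  have hneg : negRes d a < a := negRes_lt d ha₀
  have hpow : 8 * a ≤ 2 ^ (a - 1) * a := eight_mul_le_two_pow_mul ha
  rw [congMinusMinusCount_eq_rhoCount ha₀ (by omega)]
  exact rhoCount_le_rhoCount_of_injOn
    (f := fun x => dyadicPart (d + negRes d a) a (signedResidueIndex (d + 3) x))
    (fun _ _ => ⟨dyadicPart_pos ha₀ _, dyadicPart_modEq ha₀ _⟩)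
    ((dyadicPart_injective ha₀ hbig).comp_injOn (injOn_signedResidueIndex ha₀ (by omega)))
    (fun _ hx => dyadicPart_signedResidueIndex_le ha hbig (by omega) hx.1)
    (fun _ _ => dvd_dyadicPart (dvd_add_negRes d ha₀) _)
    ⟨ha₀, .inl rfl⟩ (fun _ hy => hy.1) (Nat.le_add_right _ _) (dvd_add_negRes n ha₀)

theorem stmt12 (a d : ℕ) (ha : 5 ≤ a) (hd : 1 ≤ d)
    (hbig : a * 2 ^ (a + 3) - a ≤ d + negRes d a) (n : ℕ) (hn : 1 ≤ n) :
    congMinusMinusCount d a n ≤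
      rhoCount {m : ℕ | 0 < m ∧ (m ≡ a [MOD 2 * (d + negRes d a)] ∨
        ∃ j, 1 ≤ j ∧ j ≤ a - 1 ∧
          m ≡ (d + negRes d a) + 2 ^ j * a [MOD 2 * (d + negRes d a)])}
        (n + negRes n a) := by
  exact stmt12_general a d (by omega)
    ((two_pow_pred_mul_le_mul_two_pow_sub (by omega)).trans hbig) n
end

section
/- Let a ≥ 1 and let d be a positive integer with ⌈d/a⌉ ≥ 12, and let n satisfy 1 ≤ n ≤ d + 3a. If d ≢ −3 (mod a), then q_d^{(a)}(n) ≥ Q_d^{(a,-)}(n). If d ≡ −3 (mod a), then q_d^{(a)}(n) ≥ Q_d^{(a,-)}(n) for all such n except possibly n = d + 3 + a. -/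
/-!
Below `2 * (d + 3) - a` the only admissible parts congruent to `± a` modulo `d + 3` are `a` and
`d + 3 + a`, and the latter occurs at most once. Such a partition is therefore determined by
whether `d + 3 + a` occurs, so there are at most two of them. Both possibilities can coexist for
`n < d + 3 + 2 * a` only if `a ∣ d + 3` and `n = d + 3 + a`. On the other side, `(n)` is a partition
with gaps at least `d`, and from `n = d + 2 * a` on so is `(n - a, a)`.
-/

theorem lt_cdiv_iff {a d k : ℕ} (ha : 0 < a) : k < cdiv d a ↔ k * a < d := by
  rw [cdiv, Nat.lt_div_iff_mul_lt ha]
  omega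

/-- The set of partitions counted by `congMinusCount d a n`, so that its elements can be spoken
of without subtypes. -/
def congMinusPartitions (d a n : ℕ) : Set n.Partition :=
  {p | (∀ x ∈ p.parts, x ≡ a [MOD d + 3] ∨ x + a ≡ 0 [MOD d + 3]) ∧
    ∀ x ∈ p.parts, x ≠ d + 3 - a}

theorem congMinusCount_eq_ncard (d a n : ℕ) :
    congMinusCount d a n = (congMinusPartitions d a n).ncard :=
  Nat.card_coe_set_eq _

/-- The set of partitions counted by `gapCount d a n`. The parts are listed in increasing order. -/
def gapPartitions (d a n : ℕ) : Set n.Partition :=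
  {p | (∀ x ∈ p.parts, a ≤ x) ∧ (p.parts.sort (· ≤ ·)).IsChain (fun x y => x + d ≤ y)}

theorem gapCount_eq_ncard (d a n : ℕ) : gapCount d a n = (gapPartitions d a n).ncard :=
  Nat.card_coe_set_eq _

theorem count_mul_add_count_mul {s : Multiset ℕ} {a b : ℕ} (hab : a ≠ b)
    (hs : ∀ x ∈ s, x = a ∨ x = b) : s.count a * a + s.count b * b = s.sum := by
  have hsub : s.toFinset ⊆ {a, b} := fun x hx => by simpa using hs x (by simpa using hx)
  simp [Finset.sum_multiset_count_of_subset s _ hsub, Finset.sum_pair hab]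

theorem partition_ext_of_count_eq {n a b : ℕ} (ha : 0 < a) (hab : a ≠ b) {p q : n.Partition}
    (hp : ∀ x ∈ p.parts, x = a ∨ x = b) (hq : ∀ x ∈ q.parts, x = a ∨ x = b)
    (hb : p.parts.count b = q.parts.count b) : p = q := by
  have hsum : p.parts.count a * a + p.parts.count b * b =
      q.parts.count a * a + q.parts.count b * b := by
    rw [count_mul_add_count_mul hab hp, count_mul_add_count_mul hab hq, p.parts_sum, q.parts_sum]
  have ha' : p.parts.count a = q.parts.count a :=
    Nat.eq_of_mul_eq_mul_right ha (by rw [hb] at hsum; omega)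
  refine Nat.Partition.ext (Multiset.ext.2 fun x => ?_)
  by_cases hx : x = a ∨ x = b
  · rcases hx with rfl | rfl <;> assumption
  · rw [Multiset.count_eq_zero_of_notMem fun h => hx (hp x h),
      Multiset.count_eq_zero_of_notMem fun h => hx (hq x h)]

theorem eq_or_eq_add_of_modEq {a m x : ℕ} (ham : a ≤ m) (hx : 0 < x) (hxm : x + a < 2 * m)
    (h : x ≡ a [MOD m] ∨ x + a ≡ 0 [MOD m]) (hne : x ≠ m - a) : x = a ∨ x = m + a := by
  rcases h with h | h
  · rcases le_or_gt a x with hax | hxa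
    · obtain ⟨k, hk⟩ := (Nat.modEq_iff_dvd' hax).1 h.symm
      have hk2 : k < 2 := lt_of_mul_lt_mul_left (a := m) (by omega) m.zero_le
      interval_cases k <;> omega
    · have := Nat.le_of_dvd (by omega) ((Nat.modEq_iff_dvd' hxa.le).1 h)
      omega
  · obtain ⟨k, hk⟩ := (Nat.modEq_zero_iff_dvd).1 h
    have hk2 : k < 2 := lt_of_mul_lt_mul_left (a := m) (by omega) m.zero_le
    interval_cases k <;> omega

theorem dvd_and_eq_add_of_mul_eq {a m n k l : ℕ} (hk : k * a = n) (hl : l * a + (m + a) = n)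
    (hn : n < m + 2 * a) : a ∣ m ∧ n = m + a := by
  obtain rfl : l = 0 := Nat.lt_one_iff.1 (lt_of_mul_lt_mul_right (a := a) (by omega) a.zero_le)
  have hnm : n = m + a := by omega
  exact ⟨(Nat.dvd_add_left dvd_rfl).1 (hnm ▸ ⟨k, by rw [← hk, mul_comm]⟩), hnm⟩

section congMinus

variable {a d n : ℕ} {p : n.Partition}

theorem eq_or_eq_add_of_mem_congMinusPartitions (had : a ≤ d + 3) (hn : n + a < 2 * (d + 3))
    (hp : p ∈ congMinusPartitions d a n) : ∀ x ∈ p.parts, x = a ∨ x = d + 3 + a := fun x hx =>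
  have hxn : x ≤ n := p.le_of_mem_parts hx
  eq_or_eq_add_of_modEq had (p.parts_pos hx) (by omega) (hp.1 x hx) (hp.2 x hx)

theorem count_mul_add_eq_of_mem_congMinusPartitions (had : a ≤ d + 3) (hn : n + a < 2 * (d + 3))
    (hp : p ∈ congMinusPartitions d a n) :
    p.parts.count a * a + p.parts.count (d + 3 + a) * (d + 3 + a) = n := by
  rw [count_mul_add_count_mul (by omega) (eq_or_eq_add_of_mem_congMinusPartitions had hn hp),
    p.parts_sum]

theorem count_lt_two_of_mem_congMinusPartitions (had : a ≤ d + 3) (hn : n + a < 2 * (d + 3))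
    (hp : p ∈ congMinusPartitions d a n) : p.parts.count (d + 3 + a) < 2 := by
  have hsum := count_mul_add_eq_of_mem_congMinusPartitions had hn hp
  exact lt_of_mul_lt_mul_right (a := d + 3 + a) (by omega) (Nat.zero_le _)

theorem le_of_mem_congMinusPartitions (had : a ≤ d + 3) (hn : n + a < 2 * (d + 3))
    (hp : p ∈ congMinusPartitions d a n) (hn0 : n ≠ 0) : a ≤ n := by
  have hparts : p.parts ≠ 0 := fun h => hn0 (by rw [← p.parts_sum, h, Multiset.sum_zero])
  obtain ⟨x, hx⟩ := Multiset.exists_mem_of_ne_zero hparts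
  have hxn : x ≤ n := p.le_of_mem_parts hx
  rcases eq_or_eq_add_of_mem_congMinusPartitions had hn hp x hx with rfl | rfl <;> omega

theorem injOn_count_congMinusPartitions (ha : 0 < a) (had : a ≤ d + 3)
    (hn : n + a < 2 * (d + 3)) :
    (congMinusPartitions d a n).InjOn fun p => p.parts.count (d + 3 + a) := fun _ hp _ hq =>
  partition_ext_of_count_eq ha (by omega) (eq_or_eq_add_of_mem_congMinusPartitions had hn hp)
    (eq_or_eq_add_of_mem_congMinusPartitions had hn hq)

theorem congMinusCount_le_two (ha : 0 < a) (had : a ≤ d + 3) (hn : n + a < 2 * (d + 3)) :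
    congMinusCount d a n ≤ 2 :=
  calc congMinusCount d a n = (congMinusPartitions d a n).ncard := congMinusCount_eq_ncard d a n
    _ ≤ (Set.Iio 2).ncard := Set.ncard_le_ncard_of_injOn _
        (fun _ hp => count_lt_two_of_mem_congMinusPartitions had hn hp)
        (injOn_count_congMinusPartitions ha had hn)
    _ = 2 := by simp [Set.ncard_eq_toFinset_card']

theorem congMinusPartitions_subsingleton (ha : 0 < a) (had : a ≤ d + 3)
    (hn : n + a < 2 * (d + 3)) (hn2 : n < d + 3 + 2 * a) (hex : ¬(a ∣ d + 3 ∧ n = d + 3 + a)) :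
    (congMinusPartitions d a n).Subsingleton := by
  intro p hp q hq
  refine injOn_count_congMinusPartitions ha had hn hp hq ?_
  wlog hlt : p.parts.count (d + 3 + a) < q.parts.count (d + 3 + a) generalizing p q
  · rcases (not_lt.1 hlt).eq_or_lt with heq | hgt
    · exact heq.symm
    · exact (this hq hp hgt).symm
  have hq2 := count_lt_two_of_mem_congMinusPartitions had hn hq
  have hp0 : p.parts.count (d + 3 + a) = 0 := by omega
  have hq1 : q.parts.count (d + 3 + a) = 1 := by omega
  have hpn := count_mul_add_eq_of_mem_congMinusPartitions had hn hp
  have hqn := count_mul_add_eq_of_mem_congMinusPartitions had hn hq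
  rw [hp0, zero_mul, add_zero] at hpn
  rw [hq1, one_mul] at hqn
  exact absurd (dvd_and_eq_add_of_mul_eq hpn hqn hn2) hex

end congMinus

section gap

variable {a d n : ℕ}

theorem indiscrete_mem_gapPartitions (h : n ≠ 0 → a ≤ n) :
    Nat.Partition.indiscrete n ∈ gapPartitions d a n := by
  rcases eq_or_ne n 0 with rfl | hn0
  · simp [gapPartitions]
  · simpa [gapPartitions, Nat.Partition.indiscrete_parts hn0] using h hn0

theorem gapCount_pos (h : n ≠ 0 → a ≤ n) : 0 < gapCount d a n := by
  rw [gapCount_eq_ncard, Set.ncard_pos]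
  exact ⟨_, indiscrete_mem_gapPartitions h⟩

theorem one_lt_gapCount (ha : 0 < a) (hn : d + 2 * a ≤ n) : 1 < gapCount d a n := by
  let p : n.Partition :=
    { parts := {a, n - a}
      parts_pos := by simp; omega
      parts_sum := by simp; omega }
  have hp : p ∈ gapPartitions d a n := by
    refine ⟨by simp [p]; omega, ?_⟩
    have hsort : p.parts.sort (· ≤ ·) = [a, n - a] := by
      simp [p, Multiset.insert_eq_cons, Multiset.sort_cons, show a ≤ n - a by omega]
    rw [hsort, List.isChain_pair]
    omega
  have hne : Nat.Partition.indiscrete n ≠ p := fun h => by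
    have := congrArg (fun r => Multiset.card r.parts) h
    simp [p, Nat.Partition.indiscrete_parts (show n ≠ 0 by omega)] at this
  rw [gapCount_eq_ncard, Set.one_lt_ncard]
  exact ⟨_, indiscrete_mem_gapPartitions fun _ => by omega, p, hp, hne⟩

end gap

theorem congMinusCount_le_gapCount_of_subsingleton {a d n : ℕ} (had : a ≤ d + 3)
    (hn : n + a < 2 * (d + 3)) (hsub : (congMinusPartitions d a n).Subsingleton) :
    congMinusCount d a n ≤ gapCount d a n := by
  rw [congMinusCount_eq_ncard]
  rcases (congMinusPartitions d a n).eq_empty_or_nonempty with hempty | ⟨p, hp⟩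
  · simp [hempty]
  · exact (Set.ncard_le_one_iff_subsingleton.2 hsub).trans
      (gapCount_pos (le_of_mem_congMinusPartitions had hn hp))

theorem stmt13_general (a d n : ℕ) (ha : 0 < a) (had : a ≤ d + 3) (hn : n + a < 2 * (d + 3))
    (hex : ¬(a ∣ d + 3 ∧ n = d + 3 + a)) : congMinusCount d a n ≤ gapCount d a n := by
  rcases lt_or_ge n (d + 2 * a) with hlt | hge
  · exact congMinusCount_le_gapCount_of_subsingleton had hn
      (congMinusPartitions_subsingleton ha had hn (by omega) hex)
  · exact (congMinusCount_le_two ha had hn).trans (one_lt_gapCount ha hge)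

theorem stmt13 (a d n : ℕ) (ha : 1 ≤ a) (hd : 1 ≤ d) (hceil : 12 ≤ cdiv d a)
    (hn : 1 ≤ n) (hn2 : n ≤ d + 3 * a) :
    (¬ a ∣ d + 3 → congMinusCount d a n ≤ gapCount d a n) ∧
    (a ∣ d + 3 → n ≠ d + 3 + a → congMinusCount d a n ≤ gapCount d a n) := by
  have had : 11 * a < d := (lt_cdiv_iff ha).1 hceil
  have key := stmt13_general a d n ha (by omega) (by omega)
  exact ⟨fun hdvd => key fun h => hdvd h.1, fun _ hne => key fun h => hne h.2⟩
end

section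
/- For all integers d ≥ 12 and all integers n with d + 2 ≤ n ≤ 5d, one has q_d^{(1)}(n) ≥ Q_{d−4}^{(1,-)}(n). -/
/-!
Put `m = d - 1`. The parts counted by `congMinusCount (d - 4) 1` are `1`, the numbers `m * k + 1`
with `k ≥ 1` and the numbers `m * k - 1` with `k ≥ 2`. Hence such a partition of `n` is determined
by a pair `(α, β)` of partitions, the second without parts equal to `1`: the values of `k` for the
parts of either kind. The parts other than `1` add up to `m * (|α| + |β|) + ℓ(α) - ℓ(β)`, so that
`ℓ(β) ≤ |β| / 2` bounds the level: `(2 * m - 1) * (|α| + |β|) ≤ 2 * n`.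

The numbers of pairs of level less than `2, 3, 4, 5, 6` are `2, 5, 10, 20, 36`, whatever `d` is.
For `d ≥ 13` this is at most the number of partitions of `n` into at most three parts with gaps at
least `d`. For `d = 10, 11, 12` it can be too large, and only the pairs that really fit into `n` are
counted.
-/

open Finset

section GapPartitions

variable {d a n : ℕ}

theorem sort_coe_of_isChain_add_le {l : List ℕ} (hl : l.IsChain fun x y => x + d ≤ y) :
    (l : Multiset ℕ).sort (· ≤ ·) = l := by
  have hle : l.Pairwise (· ≤ ·) :=
    List.isChain_iff_pairwise.mp (hl.imp fun _ _ h => (Nat.le_add_right _ d).trans h)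
  rw [Multiset.coe_sort]
  exact List.mergeSort_of_pairwise (by simpa using hle)

theorem card_le_gapCount {ι : Type*} (ha : 0 < a) (T : Finset ι) (f : ι → List ℕ)
    (hinj : Set.InjOn f T)
    (hf : ∀ i ∈ T, (f i).sum = n ∧ (∀ x ∈ f i, a ≤ x) ∧ (f i).IsChain fun x y => x + d ≤ y) :
    #T ≤ gapCount d a n := by
  have hsort (i : T) := sort_coe_of_isChain_add_le (hf i i.2).2.2
  let g (i : T) : {p : n.Partition // (∀ x ∈ p.parts, a ≤ x) ∧
      List.IsChain (fun x y => x + d ≤ y) (p.parts.sort (· ≤ ·))} :=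
    ⟨⟨f i, fun hx => ha.trans_le ((hf i i.2).2.1 _ hx), (hf i i.2).1⟩, (hf i i.2).2.1,
      (hsort i).symm ▸ (hf i i.2).2.2⟩
  have hg : Function.Injective g := fun i j hij => Subtype.ext <| hinj i.2 j.2 <| by
    have hcoe : (f i : Multiset ℕ) = f j := congrArg (fun p => p.1.parts) hij
    rw [← hsort i, ← hsort j, hcoe]
  exact (Nat.card_eq_finsetCard T).symm.trans_le (Nat.card_le_card_of_injective g hg)

/-- The lists with at most three entries and sum `n`, parametrized by all entries but the last.
As the last entry is a truncated difference, the sum is `n` only if the other entries add up to at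
most `n`. -/
def shortList (n : ℕ) : Unit ⊕ ℕ ⊕ (_ : ℕ) × ℕ → List ℕ
  | .inl _ => [n]
  | .inr (.inl x) => [x, n - x]
  | .inr (.inr ⟨x, y⟩) => [x, y, n - x - y]

theorem shortList_injective (n : ℕ) : Function.Injective (shortList n) := by
  rintro (_ | x | ⟨x, y⟩) (_ | x' | ⟨x', y'⟩) h <;> simp_all [shortList]

theorem one_add_card_add_sum_card_le_gapCount (b : ℕ) (ha : 0 < a) (han : a ≤ n) :
    1 + (#(Icc a ((n - d) / 2)) + ∑ x ∈ Ico a b, #(Icc (x + d) ((n - x - d) / 2))) ≤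
      gapCount d a n := by
  let T := (univ : Finset Unit).disjSum
    ((Icc a ((n - d) / 2)).disjSum ((Ico a b).sigma fun x => Icc (x + d) ((n - x - d) / 2)))
  have hT : #T = 1 + (#(Icc a ((n - d) / 2)) +
      ∑ x ∈ Ico a b, #(Icc (x + d) ((n - x - d) / 2))) := by
    simp only [T, card_disjSum, card_sigma, card_univ, Fintype.card_unit]
  rw [← hT]
  refine card_le_gapCount ha T (shortList n) (shortList_injective n).injOn fun i hi => ?_
  simp only [T, mem_disjSum, mem_univ, mem_Icc, mem_sigma, mem_Ico, true_and] at hi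
  rcases hi with ⟨_, rfl⟩ | ⟨_, ⟨x, hx, rfl⟩ | ⟨⟨x, y⟩, hxy, rfl⟩, rfl⟩
  · simpa [shortList] using han
  · have hle : x + d ≤ n - x := by omega
    simpa [shortList, hle] using by omega
  · dsimp only at hxy
    have hle : x + d ≤ y ∧ y + d ≤ n - x - y := by omega
    simpa [shortList, hle] using by omega

end GapPartitions

section Enumeration

/-- The multisets with all elements in `L` and sum `k`, for `L` with positive entries. Unlike the
`Fintype` instance of `Nat.Partition`, this enumeration evaluates under `decide +kernel`. -/
def multisetsWithSum : List ℕ → ℕ → Finset (Multiset ℕ)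
  | [], k => if k = 0 then {0} else ∅
  | r :: L, k => (range (k / r + 1)).biUnion fun i =>
      (multisetsWithSum L (k - i * r)).image (.replicate i r + ·)

theorem mem_multisetsWithSum {L : List ℕ} (hL : ∀ r ∈ L, 0 < r) {k : ℕ} {s : Multiset ℕ} :
    s ∈ multisetsWithSum L k ↔ (∀ x ∈ s, x ∈ L) ∧ s.sum = k := by
  induction L generalizing k s with
  | nil =>
    have hempty : (∀ x ∈ s, x ∈ []) ↔ s = 0 := by simp [Multiset.eq_zero_iff_forall_notMem]
    rw [multisetsWithSum, hempty]
    split_ifs with hk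
    · rw [mem_singleton, hk]
      exact (and_iff_left_of_imp fun hs => hs ▸ Multiset.sum_zero).symm
    · refine iff_of_false (notMem_empty s) fun ⟨hs, hsum⟩ => hk ?_
      rw [← hsum, hs, Multiset.sum_zero]
  | cons r L ih =>
    obtain ⟨hr, hL⟩ := List.forall_mem_cons.mp hL
    simp only [multisetsWithSum, mem_biUnion, mem_range, mem_image, ih hL, Nat.lt_succ_iff,
      Nat.le_div_iff_mul_le hr, List.mem_cons]
    constructor
    · rintro ⟨i, hi, t, ⟨ht, hsum⟩, rfl⟩
      refine ⟨fun x hx => (Multiset.mem_add.mp hx).imp Multiset.eq_of_mem_replicate (ht x), ?_⟩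
      rw [Multiset.sum_add, Multiset.sum_replicate, smul_eq_mul, hsum, Nat.add_sub_cancel' hi]
    · rintro ⟨hs, rfl⟩
      have hsplit : .replicate (s.count r) r + s.filter (¬ · = r) = s := by
        rw [← Multiset.filter_eq', Multiset.filter_add_not]
      have hsum : s.count r * r + (s.filter (¬ · = r)).sum = s.sum := by
        simpa using congrArg Multiset.sum hsplit
      refine ⟨s.count r, by omega, s.filter (¬ · = r), ⟨fun x hx => ?_, by omega⟩, hsplit⟩
      obtain ⟨hxs, hxr⟩ := Multiset.mem_filter.mp hx
      exact (hs x hxs).resolve_left hxr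

/-- The partitions of `k` into parts of size at least `r`, for `r > 0`. -/
def partitionsGE (r k : ℕ) : Finset (Multiset ℕ) :=
  multisetsWithSum (List.range' r k) k

theorem mem_partitionsGE {r k : ℕ} (hr : 0 < r) {s : Multiset ℕ} :
    s ∈ partitionsGE r k ↔ (∀ x ∈ s, r ≤ x) ∧ s.sum = k := by
  rw [partitionsGE, mem_multisetsWithSum fun x hx => hr.trans_le (List.mem_range'_1.mp hx).1]
  refine and_congr_left fun hsum => forall₂_congr fun x hx => ?_
  have hxk : x ≤ k := hsum ▸ Multiset.le_sum_of_mem hx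
  rw [List.mem_range'_1]
  omega

/-- The pairs `(α, β)` of partitions of total size `k` such that `1` is not a part of `β`. -/
def levelPairs (k : ℕ) : Finset (Multiset ℕ × Multiset ℕ) :=
  (antidiagonal k).biUnion fun ij => partitionsGE 1 ij.1 ×ˢ partitionsGE 2 ij.2

theorem mem_levelPairs {k : ℕ} {q : Multiset ℕ × Multiset ℕ} :
    q ∈ levelPairs k ↔
      (∀ x ∈ q.1, 1 ≤ x) ∧ (∀ x ∈ q.2, 2 ≤ x) ∧ q.1.sum + q.2.sum = k := by
  simp only [levelPairs, mem_biUnion, mem_product, HasAntidiagonal.mem_antidiagonal,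
    mem_partitionsGE one_pos, mem_partitionsGE two_pos]
  constructor
  · rintro ⟨ij, hij, ⟨hα, hi⟩, hβ, hj⟩
    exact ⟨hα, hβ, by rw [hi, hj, hij]⟩
  · rintro ⟨hα, hβ, hk⟩
    exact ⟨(q.1.sum, q.2.sum), hk, ⟨hα, rfl⟩, hβ, rfl⟩

/-- The pairs of level `k` for which the parts `m * i + 1` with `i ∈ α` and `m * j - 1` with
`j ∈ β` add up to at most `n`. -/
def levelPairsLE (m n k : ℕ) : Finset (Multiset ℕ × Multiset ℕ) :=
  {q ∈ levelPairs k | m * k + q.1.card ≤ n + q.2.card}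

end Enumeration

section CongruencePartitions

theorem card_subtype_partition_le {n : ℕ} {P : n.Partition → Prop} (S : Finset (Multiset ℕ))
    (hS : ∀ p, P p → p.parts ∈ S) : Nat.card {p // P p} ≤ #S :=
  (Nat.card_le_card_of_injective (fun p => (⟨p.1.parts, hS p.1 p.2⟩ : S)) fun _ _ h =>
    Subtype.ext (Nat.Partition.ext (congrArg Subtype.val h))).trans_eq (Nat.card_eq_finsetCard S)

/-- The multiset of the `m * i + 1` for `i ∈ α` and of the `m * j - 1` for `j ∈ β`. -/
def signedParts (m : ℕ) (α β : Multiset ℕ) : Multiset ℕ :=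
  α.map (m * · + 1) + β.map (m * · - 1)

variable {m : ℕ}

theorem sum_signedParts_add_card (hm : 0 < m) (α : Multiset ℕ) {β : Multiset ℕ}
    (hβ : ∀ j ∈ β, 0 < j) :
    (signedParts m α β).sum + β.card = m * (α.sum + β.sum) + α.card := by
  have hplus : (α.map (m * · + 1)).sum = m * α.sum + α.card := by
    rw [Multiset.sum_map_add, Multiset.sum_map_mul_left, Multiset.map_id']
    simp
  have hminus : (β.map (m * · - 1)).sum + β.card = m * β.sum := by
    have hcancel : β.map (fun j => m * j - 1 + 1) = β.map (m * ·) :=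
      Multiset.map_congr rfl fun j hj => Nat.sub_add_cancel (Nat.mul_pos hm (hβ j hj))
    calc (β.map (m * · - 1)).sum + β.card = (β.map fun j => m * j - 1 + 1).sum := by simp
      _ = m * β.sum := by rw [hcancel, Multiset.sum_map_mul_left, Multiset.map_id']
  rw [signedParts, Multiset.sum_add, hplus, add_assoc, hminus]
  ring

theorem eq_one_or_eq_mul_add_one_or_eq_mul_sub_one {x : ℕ}
    (hx : x ≡ 1 [MOD m] ∨ x + 1 ≡ 0 [MOD m]) (hne : x ≠ m - 1) :
    x = 1 ∨ (∃ k, 1 ≤ k ∧ x = m * k + 1) ∨ ∃ k, 2 ≤ k ∧ x = m * k - 1 := by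
  rcases hx with hx | hx
  · rcases x.eq_zero_or_pos with rfl | hpos
    · have hm : m = 1 := Nat.dvd_one.mp (Nat.modEq_zero_iff_dvd.mp hx.symm)
      omega
    · obtain ⟨k, hk⟩ := (Nat.modEq_iff_dvd' hpos).mp hx.symm
      rcases k.eq_zero_or_pos with rfl | hk0
      · left; omega
      · exact .inr (.inl ⟨k, hk0, by omega⟩)
  · obtain ⟨k, hk⟩ := Nat.modEq_zero_iff_dvd.mp hx
    refine .inr (.inr ⟨k, ?_, by omega⟩)
    by_contra! hk2
    interval_cases k <;> omega

theorem exists_eq_replicate_add_signedParts {s : Multiset ℕ}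
    (hs : ∀ x ∈ s, (x ≡ 1 [MOD m] ∨ x + 1 ≡ 0 [MOD m]) ∧ x ≠ m - 1) :
    ∃ (c : ℕ) (α β : Multiset ℕ), (∀ i ∈ α, 1 ≤ i) ∧ (∀ j ∈ β, 2 ≤ j) ∧
      s = .replicate c 1 + signedParts m α β := by
  induction s using Multiset.induction with
  | empty => exact ⟨0, 0, 0, by simp [signedParts]⟩
  | cons x s ih =>
    obtain ⟨hx, hs⟩ := Multiset.forall_mem_cons.mp hs
    obtain ⟨c, α, β, hα, hβ, rfl⟩ := ih hs
    rcases eq_one_or_eq_mul_add_one_or_eq_mul_sub_one hx.1 hx.2 with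
      rfl | ⟨k, hk, rfl⟩ | ⟨k, hk, rfl⟩
    · exact ⟨c + 1, α, β, hα, hβ, by rw [Multiset.replicate_succ, Multiset.cons_add]⟩
    · exact ⟨c, k ::ₘ α, β, Multiset.forall_mem_cons.mpr ⟨hk, hα⟩, hβ, by simp [signedParts]⟩
    · exact ⟨c, α, k ::ₘ β, hα, Multiset.forall_mem_cons.mpr ⟨hk, hβ⟩, by simp [signedParts]⟩

theorem sum_add_sum_lt {K n : ℕ} (hK : 2 * n + K < 2 * m * K) {α β : Multiset ℕ}
    (hβ : ∀ j ∈ β, 2 ≤ j) (hfit : m * (α.sum + β.sum) + α.card ≤ n + β.card) :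
    α.sum + β.sum < K := by
  have hcard : β.card * 2 ≤ β.sum := by simpa using Multiset.card_nsmul_le_sum hβ
  have hlevel : 2 * m * (α.sum + β.sum) ≤ 2 * n + (α.sum + β.sum) := by
    have hβle : β.sum ≤ α.sum + β.sum := Nat.le_add_left _ _
    linarith [Nat.zero_le α.card]
  by_contra! hle
  obtain ⟨t, ht⟩ := Nat.exists_eq_add_of_le hle
  rw [ht] at hlevel
  have hm : 0 < m := Nat.pos_of_ne_zero fun h => by simp [h] at hK
  have hmt : t ≤ m * t := Nat.le_mul_of_pos_left t hm
  linarith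

theorem congMinusCount_le_sum_card_levelPairsLE {D n K : ℕ} (hK : 2 * n + K < 2 * (D + 3) * K) :
    congMinusCount D 1 n ≤ ∑ k ∈ range K, #(levelPairsLE (D + 3) n k) := by
  let code (q : (_ : ℕ) × Multiset ℕ × Multiset ℕ) : Multiset ℕ :=
    .replicate (n - (signedParts (D + 3) q.2.1 q.2.2).sum) 1 + signedParts (D + 3) q.2.1 q.2.2
  let S := ((range K).sigma (levelPairsLE (D + 3) n)).image code
  refine (card_subtype_partition_le S fun p hp => ?_).trans
    (card_image_le.trans_eq (card_sigma _ _))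
  obtain ⟨c, α, β, hα, hβ, hparts⟩ :=
    exists_eq_replicate_add_signedParts fun x hx => ⟨hp.1 x hx, hp.2 x hx⟩
  have hn : c + (signedParts (D + 3) α β).sum = n := by
    simpa [hparts] using p.parts_sum
  have hsum := sum_signedParts_add_card (Nat.add_pos_right D three_pos) α
    fun j hj => two_pos.trans_le (hβ j hj)
  have hfit : (D + 3) * (α.sum + β.sum) + α.card ≤ n + β.card := by omega
  refine mem_image.mpr ⟨⟨α.sum + β.sum, α, β⟩, mem_sigma.mpr ⟨?_, ?_⟩, ?_⟩
  · exact mem_range.mpr (sum_add_sum_lt hK hβ hfit)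
  · exact mem_filter.mpr ⟨mem_levelPairs.mpr ⟨hα, hβ, rfl⟩, hfit⟩
  · rw [hparts, show c = n - (signedParts (D + 3) α β).sum by omega]

theorem congMinusCount_le_sum_card_levelPairs {D n K : ℕ} (hK : 2 * n + K < 2 * (D + 3) * K) :
    congMinusCount D 1 n ≤ ∑ k ∈ range K, #(levelPairs k) :=
  (congMinusCount_le_sum_card_levelPairsLE hK).trans <|
    sum_le_sum fun _ _ => card_le_card (filter_subset _ _)

end CongruencePartitions

theorem congMinusCount_le_gapCount_of_le_twelve {d n : ℕ} (hd : 10 ≤ d) (hd' : d ≤ 12)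
    (hn : d + 2 ≤ n) (hn' : n + 10 ≤ 6 * d) : congMinusCount (d - 4) 1 n ≤ gapCount d 1 n := by
  have hcount : ∀ d ∈ Icc 10 12, ∀ n ∈ Icc (d + 2) (6 * d - 10),
      ∑ k ∈ range 6, #(levelPairsLE (d - 4 + 3) n k) ≤
        1 + (#(Icc 1 ((n - d) / 2)) + ∑ x ∈ Ico 1 4, #(Icc (x + d) ((n - x - d) / 2))) := by
    decide +kernel
  have hcount' := hcount d (mem_Icc.mpr ⟨hd, hd'⟩) n (mem_Icc.mpr ⟨hn, by omega⟩)
  exact (congMinusCount_le_sum_card_levelPairsLE (by omega)).trans <|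
    hcount'.trans (one_add_card_add_sum_card_le_gapCount 4 one_pos (by omega))

theorem congMinusCount_le_gapCount_of_thirteen_le {d n : ℕ} (hd : 13 ≤ d) (hn : d + 2 ≤ n)
    (hn' : n + 10 ≤ 6 * d) : congMinusCount (d - 4) 1 n ≤ gapCount d 1 n := by
  have hgap := one_add_card_add_sum_card_le_gapCount (d := d) 4 one_pos (by omega : 1 ≤ n)
  simp only [sum_Ico_succ_top, Nat.card_Icc, Nat.reduceLeDiff, Ico_self, sum_empty] at hgap
  have hcong (K : ℕ) := congMinusCount_le_sum_card_levelPairs (D := d - 4) (n := n) (K := K)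
  have h₂ (h : n + 3 < 2 * d) : congMinusCount (d - 4) 1 n ≤ 2 :=
    (hcong 2 (by omega)).trans_eq (by decide +kernel)
  have h₃ (h : n + 4 < 3 * d) : congMinusCount (d - 4) 1 n ≤ 5 :=
    (hcong 3 (by omega)).trans_eq (by decide +kernel)
  have h₄ (h : n + 6 < 4 * d) : congMinusCount (d - 4) 1 n ≤ 10 :=
    (hcong 4 (by omega)).trans_eq (by decide +kernel)
  have h₅ (h : n + 7 < 5 * d) : congMinusCount (d - 4) 1 n ≤ 20 :=
    (hcong 5 (by omega)).trans_eq (by decide +kernel)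
  have h₆ : congMinusCount (d - 4) 1 n ≤ 36 :=
    (hcong 6 (by omega)).trans_eq (by decide +kernel)
  omega

theorem stmt14_general (d n : ℕ) (hd : 10 ≤ d) (hn1 : d + 2 ≤ n) (hn2 : n + 10 ≤ 6 * d) :
    congMinusCount (d - 4) 1 n ≤ gapCount d 1 n := by
  rcases le_or_gt d 12 with hd12 | hd13
  · exact congMinusCount_le_gapCount_of_le_twelve hd hd12 hn1 hn2
  · exact congMinusCount_le_gapCount_of_thirteen_le hd13 hn1 hn2

theorem stmt14 (d n : ℕ) (hd : 12 ≤ d) (hn1 : d + 2 ≤ n) (hn2 : n ≤ 5 * d) :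
    congMinusCount (d - 4) 1 n ≤ gapCount d 1 n :=
  stmt14_general d n (by omega) hn1 (by omega)
end

section
/- For all integers d ≥ 31 and all integers n ≥ d + 2, one has ρ(T_{5,d}; n) ≥ Q_{d−3}^{(1,-)}(n). -/
/-!
The parts allowed on the left are `1`, `d + 1`, `2d - 1`, `2d + 1`, `3d - 1`, `3d + 1`, …, and
those allowed on the right are `1`, `d + 2`, `d + 4`, `d + 8`, `d + 16`, `2d + 1`, …. For `16 ≤ d`
the left parts other than `1`, `d + 1`, `3d + 1` inject into strictly smaller right parts other
than `1`, `d + 2`, `d + 4`. Once the parts moved by this injection are chosen, what is left to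
compare is the number of partitions of `m` into `1`, `d + 1`, `3d + 1` with that of partitions of
some `m' ≥ m` into `1`, `d + 2`, `d + 4`. The recursion on the largest part shows that the former
is at most the latter, the only exception being `m = m' = d + 1`; it would require that no part
was moved, and hence that the partitioned number is `d + 1`.
-/

/-- The multisets of parts of the partitions of `n` with all parts in `R`; they are counted by
`rhoCount R n`, and multiset operations act on them without transport along sums. -/
def restrictedParts (R : Set ℕ) (n : ℕ) : Set (Multiset ℕ) :=
  {s | s.sum = n ∧ ∀ x ∈ s, 0 < x ∧ x ∈ R}

section RhoCount

variable {R R' : Set ℕ} {m n u v : ℕ} {s t : Multiset ℕ}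

theorem image_parts_eq_restrictedParts (R : Set ℕ) (n : ℕ) :
    Nat.Partition.parts '' {p : n.Partition | ∀ x ∈ p.parts, x ∈ R} = restrictedParts R n := by
  ext s
  constructor
  · rintro ⟨p, hp, rfl⟩
    exact ⟨p.parts_sum, fun x hx => ⟨p.parts_pos hx, hp x hx⟩⟩
  · rintro ⟨hsum, hs⟩
    exact ⟨⟨s, fun hx => (hs _ hx).1, hsum⟩, fun x hx => (hs x hx).2, rfl⟩

theorem finite_restrictedParts (R : Set ℕ) (n : ℕ) : (restrictedParts R n).Finite :=
  image_parts_eq_restrictedParts R n ▸ (Set.toFinite _).image _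

theorem rhoCount_eq_ncard (R : Set ℕ) (n : ℕ) : rhoCount R n = (restrictedParts R n).ncard := by
  rw [← image_parts_eq_restrictedParts,
    Set.ncard_image_of_injective _ fun _ _ h => Nat.Partition.ext h]
  rfl

theorem add_mem_restrictedParts (hs : s ∈ restrictedParts R m) (ht : t ∈ restrictedParts R' n) :
    s + t ∈ restrictedParts (R ∪ R') (m + n) := by
  refine ⟨by rw [Multiset.sum_add, hs.1, ht.1], fun x hx => ?_⟩
  rcases Multiset.mem_add.mp hx with hx | hx
  · exact ⟨(hs.2 x hx).1, .inl (hs.2 x hx).2⟩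
  · exact ⟨(ht.2 x hx).1, .inr (ht.2 x hx).2⟩

theorem cons_mem_restrictedParts (hv : 0 < v) (hvR : v ∈ R) (hs : s ∈ restrictedParts R n) :
    v ::ₘ s ∈ restrictedParts R (n + v) :=
  ⟨by rw [Multiset.sum_cons, hs.1, add_comm],
    Multiset.forall_mem_cons.mpr ⟨⟨hv, hvR⟩, hs.2⟩⟩

theorem rhoCount_mono (h : R ⊆ R') (n : ℕ) : rhoCount R n ≤ rhoCount R' n := by
  simp only [rhoCount_eq_ncard]
  exact Set.ncard_le_ncard (fun s hs => ⟨hs.1, fun x hx => ⟨(hs.2 x hx).1, h (hs.2 x hx).2⟩⟩)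
    (finite_restrictedParts R' n)

theorem monotone_rhoCount (h : 1 ∈ R) : Monotone (rhoCount R) := by
  refine monotone_nat_of_le_succ fun n => ?_
  simp only [rhoCount_eq_ncard]
  exact Set.ncard_le_ncard_of_injOn _ (fun s hs => cons_mem_restrictedParts one_pos h hs)
    (fun _ _ _ _ hst => (Multiset.cons_inj_right 1).mp hst) (finite_restrictedParts R (n + 1))

theorem rhoCount_insert_of_lt (h : n < v) : rhoCount (insert v R) n = rhoCount R n := by
  refine le_antisymm ?_ (rhoCount_mono (Set.subset_insert v R) n)
  simp only [rhoCount_eq_ncard]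
  refine Set.ncard_le_ncard (fun s hs => ⟨hs.1, fun x hx => ?_⟩) (finite_restrictedParts R n)
  obtain ⟨hpos, hxv | hxR⟩ := hs.2 x hx
  · have := hs.1 ▸ Multiset.le_sum_of_mem hx
    omega
  · exact ⟨hpos, hxR⟩

theorem restrictedParts_insert_add (hv : 0 < v) (n : ℕ) :
    restrictedParts (insert v R) (n + v) =
      (v ::ₘ ·) '' restrictedParts (insert v R) n ∪ restrictedParts R (n + v) := by
  ext s
  constructor
  · intro hs
    by_cases hvs : v ∈ s
    · obtain ⟨t, rfl⟩ := Multiset.exists_cons_of_mem hvs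
      have hsum := hs.1
      rw [Multiset.sum_cons] at hsum
      exact .inl ⟨t, ⟨by omega, fun x hx => hs.2 x (Multiset.mem_cons_of_mem hx)⟩, rfl⟩
    · refine .inr ⟨hs.1, fun x hx => ⟨(hs.2 x hx).1, (hs.2 x hx).2.resolve_left ?_⟩⟩
      rintro rfl
      exact hvs hx
  · rintro (⟨t, ht, rfl⟩ | hs)
    · exact cons_mem_restrictedParts hv (Set.mem_insert v R) ht
    · exact ⟨hs.1, fun x hx => ⟨(hs.2 x hx).1, .inr (hs.2 x hx).2⟩⟩

theorem rhoCount_insert_add (hv : 0 < v) (hvR : v ∉ R) (n : ℕ) :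
    rhoCount (insert v R) (n + v) = rhoCount (insert v R) n + rhoCount R (n + v) := by
  have hdisj : Disjoint ((v ::ₘ ·) '' restrictedParts (insert v R) n)
      (restrictedParts R (n + v)) := by
    rw [Set.disjoint_left]
    rintro _ ⟨t, -, rfl⟩ hs
    exact hvR (hs.2 v (Multiset.mem_cons_self v t)).2
  simp only [rhoCount_eq_ncard]
  rw [restrictedParts_insert_add hv,
    Set.ncard_union_eq hdisj ((finite_restrictedParts _ n).image _) (finite_restrictedParts R _),
    Set.ncard_image_of_injective _ fun _ _ h => (Multiset.cons_inj_right v).mp h]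

theorem rhoCount_singleton_one (n : ℕ) : rhoCount {1} n = 1 := by
  have : restrictedParts {1} n = {Multiset.replicate n 1} := by
    ext s
    constructor
    · rintro ⟨rfl, hs⟩
      rw [Multiset.eq_replicate_card.mpr fun x hx => (hs x hx).2]
      simp
    · rintro rfl
      exact ⟨by simp, fun x hx => by simp [Multiset.eq_of_mem_replicate hx]⟩
  rw [rhoCount_eq_ncard, this, Set.ncard_singleton]

theorem rhoCount_pair_one (hu : 1 < u) (n : ℕ) : rhoCount {u, 1} n = n / u + 1 := by
  induction n using Nat.strong_induction_on with
  | _ n ih =>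
  rcases lt_or_ge n u with h | h
  · rw [rhoCount_insert_of_lt h, rhoCount_singleton_one, Nat.div_eq_of_lt h]
  · obtain ⟨m, rfl⟩ := Nat.exists_eq_add_of_le' h
    rw [rhoCount_insert_add (by omega) (by simpa using hu.ne'), ih m (by omega),
      rhoCount_singleton_one, Nat.add_div_right m (by omega)]

theorem rhoCount_triple_one_of_lt (hu : 1 < u) (h : n < v) :
    rhoCount {v, u, 1} n = n / u + 1 := by
  rw [rhoCount_insert_of_lt h, rhoCount_pair_one hu]

theorem rhoCount_triple_one_add (hu : 1 < u) (huv : u < v) (n : ℕ) :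
    rhoCount {v, u, 1} (n + v) = rhoCount {v, u, 1} n + ((n + v) / u + 1) := by
  have hv : v ∉ ({u, 1} : Set ℕ) := by
    simp only [Set.mem_insert_iff, Set.mem_singleton_iff]
    omega
  rw [rhoCount_insert_add (by omega) hv, rhoCount_pair_one hu]

end RhoCount

section Multiset

variable {α β : Type*}

theorem map_injOn_of_injOn {f : α → β} {s : Set α} (hf : Set.InjOn f s) :
    Set.InjOn (Multiset.map f) {t | ∀ x ∈ t, x ∈ s} := by
  intro t ht t' ht' h
  rcases t.empty_or_exists_mem with rfl | ⟨x, -⟩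
  · exact (Multiset.map_eq_zero.mp h.symm).symm
  have : Nonempty α := ⟨x⟩
  have map_invFunOn {t : Multiset α} (ht : ∀ x ∈ t, x ∈ s) :
      (t.map f).map (Function.invFunOn f s) = t := by
    rw [Multiset.map_map]
    exact (Multiset.map_congr rfl fun x hx => hf.leftInvOn_invFunOn (ht x hx)).trans
      (Multiset.map_id t)
  rw [← map_invFunOn ht, h, map_invFunOn ht']

theorem add_inj_of_disjoint {s t : Set α} (h : Disjoint s t) {a a' b b' : Multiset α}
    (ha : ∀ x ∈ a, x ∈ s) (ha' : ∀ x ∈ a', x ∈ s) (hb : ∀ x ∈ b, x ∈ t)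
    (hb' : ∀ x ∈ b', x ∈ t) (heq : a + b = a' + b') : a = a' ∧ b = b' := by
  classical
  have filter_add {a b : Multiset α} (ha : ∀ x ∈ a, x ∈ s) (hb : ∀ x ∈ b, x ∈ t) :
      (a + b).filter (· ∈ s) = a := by
    rw [Multiset.filter_add, Multiset.filter_eq_self.mpr ha,
      Multiset.filter_eq_nil.mpr fun x hx hxs => h.notMem_of_mem_left hxs (hb x hx), add_zero]
  have haa' : a = a' := by rw [← filter_add ha hb, heq, filter_add ha' hb']
  exact ⟨haa', by rwa [haa', add_right_inj] at heq⟩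

end Multiset

section Comparison

variable {A A' B B' : Set ℕ} {φ : ℕ → ℕ} {m n : ℕ} {s t : Multiset ℕ}

theorem sum_map_add_card_le_sum (h : ∀ x ∈ t, φ x < x) : (t.map φ).sum + t.card ≤ t.sum := by
  simpa [Multiset.sum_map_add] using
    Multiset.sum_map_le_sum_map (fun x => φ x + 1) id fun x hx => Nat.succ_le_of_lt (h x hx)

theorem sum_filter_le_of_mem_restrictedParts (hs : s ∈ restrictedParts A n) (p : ℕ → Prop)
    [DecidablePred p] : (s.filter p).sum ≤ n := by
  have hsum := Multiset.sum_filter_add_sum_filter_not (s := s) p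
  exact hs.1 ▸ hsum ▸ Nat.le_add_right _ _

open scoped Classical in
theorem filter_notMem_mem_restrictedParts (hs : s ∈ restrictedParts (A ∪ B) n) :
    s.filter (· ∉ B) ∈ restrictedParts A (n - (s.filter (· ∈ B)).sum) := by
  refine ⟨?_, fun x hx => ?_⟩
  · rw [← hs.1, ← Multiset.filter_add_not (· ∈ B) s]
    simp
  · obtain ⟨hxs, hxB⟩ := Multiset.mem_filter.mp hx
    exact ⟨(hs.2 x hxs).1, (hs.2 x hxs).2.resolve_right hxB⟩

theorem exists_injOn_of_rhoCount_le {m' : ℕ} (h : rhoCount A m ≤ rhoCount A' m') :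
    ∃ g : Multiset ℕ → Multiset ℕ,
      Set.MapsTo g (restrictedParts A m) (restrictedParts A' m') ∧
        Set.InjOn g (restrictedParts A m) := by
  simp only [rhoCount_eq_ncard] at h
  rw [← Nat.cast_le (α := ℕ∞), (finite_restrictedParts A m).cast_ncard_eq,
    (finite_restrictedParts A' m').cast_ncard_eq] at h
  obtain ⟨g, hmaps, hinj⟩ := (finite_restrictedParts A m).exists_injOn_of_encard_le h
  exact ⟨g, hmaps, hinj⟩

-- The parts in `B` are moved by `φ`; the remaining ones are moved by an injection that depends on
-- the multiset of parts in `B`.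
theorem rhoCount_union_le_rhoCount_union (hdisj : Disjoint A' B') (hpos : 0 ∉ B')
    (hmaps : Set.MapsTo φ B B') (hinj : Set.InjOn φ B)
    (h : ∀ t : Multiset ℕ, (∀ x ∈ t, x ∈ B) → t.sum ≤ n →
      (t.map φ).sum ≤ n ∧ rhoCount A (n - t.sum) ≤ rhoCount A' (n - (t.map φ).sum)) :
    rhoCount (A ∪ B) n ≤ rhoCount (A' ∪ B') n := by
  classical
  choose! g hgmaps hginj using fun t ht hn => exists_injOn_of_rhoCount_le (h t ht hn).2
  let T (s : Multiset ℕ) := s.filter (· ∈ B)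
  let F (s : Multiset ℕ) := g (T s) (s.filter (· ∉ B)) + (T s).map φ
  have hT (s) : ∀ x ∈ T s, x ∈ B := fun x hx => (Multiset.mem_filter.mp hx).2
  have hTmap (s) : ∀ y ∈ (T s).map φ, y ∈ B' := fun y hy => by
    obtain ⟨x, hx, rfl⟩ := Multiset.mem_map.mp hy
    exact hmaps (hT s x hx)
  have hTn {s} (hs : s ∈ restrictedParts (A ∪ B) n) : (T s).sum ≤ n :=
    sum_filter_le_of_mem_restrictedParts hs (· ∈ B)
  have hg {s} (hs : s ∈ restrictedParts (A ∪ B) n) :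
      g (T s) (s.filter (· ∉ B)) ∈ restrictedParts A' (n - ((T s).map φ).sum) :=
    hgmaps _ (hT s) (hTn hs) (filter_notMem_mem_restrictedParts hs)
  simp only [rhoCount_eq_ncard]
  refine Set.ncard_le_ncard_of_injOn F (fun s hs => ?_) (fun s hs s' hs' hF => ?_)
    (finite_restrictedParts _ n)
  · have hmap : (T s).map φ ∈ restrictedParts B' ((T s).map φ).sum :=
      ⟨rfl, fun y hy => ⟨Nat.pos_of_ne_zero fun h0 => hpos (h0 ▸ hTmap s y hy), hTmap s y hy⟩⟩
    have hsum := (h _ (hT s) (hTn hs)).1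
    simpa only [Nat.sub_add_cancel hsum] using add_mem_restrictedParts (hg hs) hmap
  · obtain ⟨hgg, hmap⟩ := add_inj_of_disjoint hdisj (fun x hx => ((hg hs).2 x hx).2)
      (fun x hx => ((hg hs').2 x hx).2) (hTmap s) (hTmap s') hF
    have hTT : T s = T s' := map_injOn_of_injOn hinj (hT s) (hT s') hmap
    have hrest : s.filter (· ∉ B) = s'.filter (· ∉ B) := by
      have hmem' : s'.filter (· ∉ B) ∈ restrictedParts A (n - (T s).sum) :=
        hTT ▸ filter_notMem_mem_restrictedParts hs'
      rw [← hTT] at hgg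
      exact hginj _ (hT s) (hTn hs) (filter_notMem_mem_restrictedParts hs) hmem' hgg
    rw [← Multiset.filter_add_not (· ∈ B) s, ← Multiset.filter_add_not (· ∈ B) s', hrest]
    exact congrArg (· + _) hTT

end Comparison

section Triples

variable {d m n : ℕ}

theorem monotone_rhoCount_triple_one (u v : ℕ) : Monotone (rhoCount {v, u, 1}) :=
  monotone_rhoCount (by simp)

theorem two_le_rhoCount_triple (h : d + 2 ≤ n) : 2 ≤ rhoCount {d + 4, d + 2, 1} n := by
  refine le_trans ?_ (monotone_rhoCount_triple_one _ _ h)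
  rw [rhoCount_triple_one_of_lt (by omega) (by omega), Nat.div_self (by omega)]

theorem rhoCount_triple_succ_le (hd : 0 < d) (h : d + 2 ≤ n) :
    rhoCount {3 * d + 1, d + 1, 1} (d + 1) ≤ rhoCount {d + 4, d + 2, 1} n := by
  rw [rhoCount_triple_one_of_lt (by omega) (by omega), Nat.div_self (by omega)]
  exact two_le_rhoCount_triple h

theorem three_le_rhoCount_triple (h : d + 4 ≤ n) : 3 ≤ rhoCount {d + 4, d + 2, 1} n := by
  refine le_trans ?_ (monotone_rhoCount_triple_one _ _ h)
  have hzero : rhoCount {d + 4, d + 2, 1} 0 = 1 := by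
    rw [rhoCount_triple_one_of_lt (by omega) (by omega), Nat.zero_div]
  have hdiv : 1 ≤ (d + 4) / (d + 2) := Nat.div_pos (by omega) (by omega)
  have hadd := rhoCount_triple_one_add (u := d + 2) (v := d + 4) (by omega) (by omega) 0
  rw [zero_add, hzero] at hadd
  omega

theorem div_succ_le_div_add_div (hd : 3 ≤ d) (hn : d + 4 ≤ n) :
    n / (d + 1) ≤ n / (d + 2) + (n - (d + 4)) / (d + 2) + 1 := by
  set u := n / (d + 2)
  set w := (n - (d + 4)) / (d + 2) with hw
  have hu_pos : 1 ≤ u := Nat.div_pos (by omega) (by omega)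
  have hwu : w + 1 ≤ u := by
    rw [← Nat.add_div_right _ (by omega)]
    exact Nat.div_le_div_right (by omega)
  have hn_lt : n < (w + 1) * (d + 2) + (d + 4) := by
    have := Nat.lt_mul_div_succ (n - (d + 4)) (by omega : 0 < d + 2)
    rw [← hw, mul_comm] at this
    omega
  have hgap : w + 4 ≤ u * (d + 1) := by nlinarith
  refine Nat.lt_succ_iff.mp (Nat.div_lt_of_lt_mul ?_)
  calc n < (w + 2) * (d + 1) + (w + 4) := by linarith
    _ ≤ (w + 2) * (d + 1) + u * (d + 1) := by gcongr
    _ = (d + 1) * (u + w + 1).succ := by rw [Nat.succ_eq_add_one]; ring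

theorem rhoCount_triple_le_of_lt (hd : 2 ≤ d) (hlt : n < 3 * d + 1) (hn : n ≠ d + 1) :
    rhoCount {3 * d + 1, d + 1, 1} n ≤ rhoCount {d + 4, d + 2, 1} n := by
  rw [rhoCount_triple_one_of_lt (by omega) hlt]
  rcases lt_or_ge n (d + 2) with h | h
  · rw [Nat.div_eq_of_lt (by omega), rhoCount_triple_one_of_lt (by omega) (by omega)]
    exact Nat.le_add_left _ _
  rcases lt_or_ge n (2 * (d + 1)) with h' | h'
  · have hdiv : n / (d + 1) < 2 := Nat.div_lt_of_lt_mul (by omega)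
    have := two_le_rhoCount_triple h
    omega
  · have hdiv : n / (d + 1) < 3 := Nat.div_lt_of_lt_mul (by omega)
    have := three_le_rhoCount_triple (d := d) (n := n) (by omega)
    omega

theorem rhoCount_triple_le (hd : 8 ≤ d) (hn : n ≠ d + 1) :
    rhoCount {3 * d + 1, d + 1, 1} n ≤ rhoCount {d + 4, d + 2, 1} n := by
  induction n using Nat.strong_induction_on with
  | _ n ih =>
  rcases lt_or_ge n (3 * d + 1) with h | h
  · exact rhoCount_triple_le_of_lt (by omega) h hn
  obtain ⟨m, rfl⟩ := Nat.exists_eq_add_of_le' h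
  have hleft := rhoCount_triple_one_add (u := d + 1) (v := 3 * d + 1) (by omega) (by omega) m
  -- As `3 * d + 1 = 2 * (d + 4) + (d - 7)`, one step of the left recursion is paid for by two
  -- steps of the right one.
  have hright₁ := rhoCount_triple_one_add (u := d + 2) (v := d + 4) (by omega) (by omega)
    (m + (d - 7))
  have hright₂ := rhoCount_triple_one_add (u := d + 2) (v := d + 4) (by omega) (by omega)
    (m + (d - 7) + (d + 4))
  have hdiv := div_succ_le_div_add_div (d := d) (n := m + (3 * d + 1)) (by omega) (by omega)
  rw [show m + (3 * d + 1) - (d + 4) = m + (d - 7) + (d + 4) by omega] at hdiv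
  rw [show m + (d - 7) + (d + 4) + (d + 4) = m + (3 * d + 1) by omega] at hright₂
  have hstep : rhoCount {3 * d + 1, d + 1, 1} m ≤ rhoCount {d + 4, d + 2, 1} (m + (d - 7)) := by
    rcases eq_or_ne m (d + 1) with rfl | hm
    · exact rhoCount_triple_succ_le (by omega) (by omega)
    · exact (ih m (by omega) hm).trans (monotone_rhoCount_triple_one _ _ (by omega))
  omega

theorem rhoCount_triple_le_of_ne_or_lt {m' : ℕ} (hd : 8 ≤ d) (hm : m ≤ m')
    (h : m ≠ d + 1 ∨ m < m') :
    rhoCount {3 * d + 1, d + 1, 1} m ≤ rhoCount {d + 4, d + 2, 1} m' := by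
  rcases eq_or_ne m (d + 1) with rfl | hne
  · exact rhoCount_triple_succ_le (by omega) (by omega)
  · exact (rhoCount_triple_le hd hne).trans (monotone_rhoCount_triple_one _ _ hm)

end Triples

section Residues

variable {d x : ℕ}

/-- The positive integers congruent to `1` or to `d + 2 ^ j` with `1 ≤ j ≤ 4` modulo `2 * d`;
this is the set `T_{5,d}`. -/
def powerResidueParts (d : ℕ) : Set ℕ :=
  {m : ℕ | 0 < m ∧ (m ≡ 1 [MOD 2 * d] ∨ ∃ j, 1 ≤ j ∧ j ≤ 4 ∧ m ≡ d + 2 ^ j [MOD 2 * d])}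

/-- The numbers congruent to `±1` modulo `d` and at least `2 * d - 1`, except `3 * d + 1`: the
domain on which `shrinkPart` injects into the numbers of `powerResidueParts d` other than `1`,
`d + 2` and `d + 4`. -/
def shrinkableParts (d : ℕ) : Set ℕ :=
  {x | (x ≡ 1 [MOD d] ∨ x + 1 ≡ 0 [MOD d]) ∧ 2 * d - 1 ≤ x ∧ x ≠ 3 * d + 1}

/-- The map carrying the residues `1`, `d - 1`, `d + 1`, `2 * d - 1` modulo `2 * d` to `d + 16`,
`1`, `d + 2`, `d + 8`, by a shift that depends only on the residue. The shift is written as an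
addition before the subtraction of `2 * d`, which does not truncate for `2 * d - 1 ≤ x`. -/
def shrinkPart (d x : ℕ) : ℕ :=
  x + (if x % (2 * d) = 1 then d + 15 else if x % (2 * d) = d - 1 then d + 2
    else if x % (2 * d) = d + 1 then 1 else d + 9) - 2 * d

theorem mod_two_mul_of_modEq (hd : 1 < d) (hx : x ≡ 1 [MOD d] ∨ x + 1 ≡ 0 [MOD d]) :
    x % (2 * d) = 1 ∨ x % (2 * d) = d - 1 ∨ x % (2 * d) = d + 1 ∨ x % (2 * d) = 2 * d - 1 := by
  have hxd : x % d = 1 ∨ x % d = d - 1 := by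
    refine hx.imp (fun h => ?_) fun h => ?_
    · exact Nat.mod_eq_of_modEq h hd
    · have hpred : x ≡ d - 1 [MOD d] :=
        Nat.ModEq.add_right_cancel' 1 <| h.trans <| by simp [Nat.ModEq, Nat.sub_add_cancel hd.le]
      exact Nat.mod_eq_of_modEq hpred (by omega)
  rw [mul_comm, Nat.mod_mul]
  rcases Nat.mod_two_eq_zero_or_one (x / d) with h | h <;> rw [h] <;> omega

theorem shrinkPart_cases (hd : 3 ≤ d) (hx : x ∈ shrinkableParts d) :
    shrinkPart d x ≡ d + 16 [MOD 2 * d] ∧ shrinkPart d x + 2 * d = x + (d + 15) ∨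
    shrinkPart d x ≡ 1 [MOD 2 * d] ∧ shrinkPart d x + 2 * d = x + (d + 2) ∨
    shrinkPart d x ≡ d + 2 [MOD 2 * d] ∧ shrinkPart d x + 2 * d = x + 1 ∨
    shrinkPart d x ≡ d + 8 [MOD 2 * d] ∧ shrinkPart d x + 2 * d = x + (d + 9) := by
  have hge := hx.2.1
  have hmod {r c s : ℕ} (hr : x % (2 * d) = r) (hs : r + c = s ∨ r + c = s + 2 * d)
      (hy : shrinkPart d x + 2 * d = x + c) : shrinkPart d x ≡ s [MOD 2 * d] := by
    have hxr : x ≡ r [MOD 2 * d] := hr ▸ (Nat.mod_modEq x (2 * d)).symm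
    have h := hxr.add_right c
    rw [← hy] at h
    rcases hs with hs | hs <;> rw [hs] at h <;> simpa [Nat.ModEq] using h
  rcases mod_two_mul_of_modEq (by omega) hx.1 with h | h | h | h
  · have hy : shrinkPart d x + 2 * d = x + (d + 15) := by
      rw [shrinkPart, if_pos h]
      omega
    exact .inl ⟨hmod h (by omega) hy, hy⟩
  · have hy : shrinkPart d x + 2 * d = x + (d + 2) := by
      rw [shrinkPart, if_neg (by omega), if_pos h]
      omega
    exact .inr (.inl ⟨hmod h (by omega) hy, hy⟩)
  · have hy : shrinkPart d x + 2 * d = x + 1 := by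
      rw [shrinkPart, if_neg (by omega), if_neg (by omega), if_pos h]
      omega
    exact .inr (.inr (.inl ⟨hmod h (by omega) hy, hy⟩))
  · have hy : shrinkPart d x + 2 * d = x + (d + 9) := by
      rw [shrinkPart, if_neg (by omega), if_neg (by omega), if_neg (by omega)]
      omega
    exact .inr (.inr (.inr ⟨hmod h (by omega) hy, hy⟩))

theorem shrinkPart_lt (hd : 16 ≤ d) (hx : x ∈ shrinkableParts d) : shrinkPart d x < x := by
  have := shrinkPart_cases (by omega) hx
  omega

theorem eq_of_modEq_of_lt_add {a b k : ℕ} (h : a ≡ b [MOD k]) (hab : a < b + k)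
    (hba : b < a + k) : a = b :=
  h.eq_of_abs_lt (abs_lt.mpr ⟨by omega, by omega⟩)

theorem shrinkPart_pos (hd : 3 ≤ d) (hx : x ∈ shrinkableParts d) : 0 < shrinkPart d x := by
  have hge := hx.2.1
  by_contra! hzero
  rcases shrinkPart_cases hd hx with ⟨-, h⟩ | ⟨-, h⟩ | ⟨hmod, -⟩ | ⟨-, h⟩
  · omega
  · omega
  · have := eq_of_modEq_of_lt_add hmod (by omega) (by omega)
    omega
  · omega

theorem shrinkPart_notMem (hd : 16 ≤ d) (hx : x ∈ shrinkableParts d) :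
    shrinkPart d x ∉ ({d + 4, d + 2, 1} : Set ℕ) := by
  have hcases := shrinkPart_cases (by omega) hx
  obtain ⟨-, hge, hne⟩ := hx
  simp only [Set.mem_insert_iff, Set.mem_singleton_iff]
  rintro (h | h | h) <;>
  rcases hcases with ⟨hmod, hx⟩ | ⟨hmod, hx⟩ | ⟨hmod, hx⟩ | ⟨hmod, hx⟩ <;>
  · have := eq_of_modEq_of_lt_add hmod (by omega) (by omega)
    omega

theorem mapsTo_shrinkPart (hd : 16 ≤ d) :
    Set.MapsTo (shrinkPart d) (shrinkableParts d) (powerResidueParts d \ {d + 4, d + 2, 1}) := by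
  refine fun x hx => ⟨⟨shrinkPart_pos (by omega) hx, ?_⟩, shrinkPart_notMem hd hx⟩
  rcases shrinkPart_cases (by omega) hx with ⟨h, -⟩ | ⟨h, -⟩ | ⟨h, -⟩ | ⟨h, -⟩
  · exact .inr ⟨4, by norm_num, le_rfl, h⟩
  · exact .inl h
  · exact .inr ⟨1, le_rfl, by norm_num, h⟩
  · exact .inr ⟨3, by norm_num, by norm_num, h⟩

theorem injOn_shrinkPart (hd : 16 ≤ d) : Set.InjOn (shrinkPart d) (shrinkableParts d) := by
  intro x hx y hy hxy
  have hycases := shrinkPart_cases (by omega) hy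
  rw [← hxy] at hycases
  rcases shrinkPart_cases (by omega) hx with ⟨hmod, h⟩ | ⟨hmod, h⟩ | ⟨hmod, h⟩ | ⟨hmod, h⟩ <;>
  rcases hycases with ⟨hmod', h'⟩ | ⟨hmod', h'⟩ | ⟨hmod', h'⟩ | ⟨hmod', h'⟩ <;>
  · have := eq_of_modEq_of_lt_add (hmod.symm.trans hmod') (by omega) (by omega)
    omega

theorem setOf_modEq_one_or_neg_one_subset (hd : 2 ≤ d) :
    {x | (x ≡ 1 [MOD d] ∨ x + 1 ≡ 0 [MOD d]) ∧ x ≠ d - 1} ⊆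
      {3 * d + 1, d + 1, 1} ∪ shrinkableParts d := by
  rintro x ⟨hx, hne⟩
  rcases lt_or_ge x (2 * d - 1) with hlt | hge
  · have := mod_two_mul_of_modEq hd hx
    rw [Nat.mod_eq_of_lt (by omega)] at this
    left
    simp only [Set.mem_insert_iff, Set.mem_singleton_iff]
    omega
  · rcases eq_or_ne x (3 * d + 1) with rfl | hne'
    · exact .inl (.inl rfl)
    · exact .inr ⟨hx, hge, hne'⟩

theorem triple_subset_powerResidueParts (d : ℕ) :
    {d + 4, d + 2, 1} ⊆ powerResidueParts d := by
  rintro x (rfl | rfl | rfl)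
  · exact ⟨by omega, .inr ⟨2, by norm_num, by norm_num, rfl⟩⟩
  · exact ⟨by omega, .inr ⟨1, le_rfl, by norm_num, rfl⟩⟩
  · exact ⟨one_pos, .inl rfl⟩

end Residues

theorem congMinusCount_eq_rhoCount (d a n : ℕ) :
    congMinusCount d a n =
      rhoCount {x | (x ≡ a [MOD d + 3] ∨ x + a ≡ 0 [MOD d + 3]) ∧ x ≠ d + 3 - a} n := by
  simp only [congMinusCount, rhoCount, Set.mem_ofPred_eq, forall_and]

theorem rhoCount_triple_union_le {d n : ℕ} (hd : 16 ≤ d) (hn : n ≠ d + 1) :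
    rhoCount ({3 * d + 1, d + 1, 1} ∪ shrinkableParts d) n ≤
      rhoCount ({d + 4, d + 2, 1} ∪ powerResidueParts d \ {d + 4, d + 2, 1}) n := by
  refine rhoCount_union_le_rhoCount_union Set.disjoint_sdiff_right (fun h => h.1.1.false)
    (mapsTo_shrinkPart hd) (injOn_shrinkPart hd) fun t ht htn => ?_
  have hsum := sum_map_add_card_le_sum (φ := shrinkPart d) fun x hx => shrinkPart_lt hd (ht x hx)
  refine ⟨by omega, rhoCount_triple_le_of_ne_or_lt (by omega) (by omega) ?_⟩
  rcases t.empty_or_exists_mem with rfl | ⟨x, hx⟩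
  · exact .inl (by simpa using hn)
  · have := Multiset.card_pos_iff_exists_mem.mpr ⟨x, hx⟩
    exact .inr (by omega)

theorem stmt15_general (d n : ℕ) (hd : 16 ≤ d) (hn : n ≠ d + 1) :
    congMinusCount (d - 3) 1 n ≤
      rhoCount {m : ℕ | 0 < m ∧ (m ≡ 1 [MOD 2 * d] ∨
        ∃ j, 1 ≤ j ∧ j ≤ 4 ∧ m ≡ d + 2 ^ j [MOD 2 * d])} n := by
  calc congMinusCount (d - 3) 1 n
      = rhoCount {x | (x ≡ 1 [MOD d] ∨ x + 1 ≡ 0 [MOD d]) ∧ x ≠ d - 1} n := by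
        rw [congMinusCount_eq_rhoCount, Nat.sub_add_cancel (by omega)]
    _ ≤ rhoCount ({3 * d + 1, d + 1, 1} ∪ shrinkableParts d) n :=
        rhoCount_mono (setOf_modEq_one_or_neg_one_subset (by omega)) n
    _ ≤ rhoCount ({d + 4, d + 2, 1} ∪ powerResidueParts d \ {d + 4, d + 2, 1}) n :=
        rhoCount_triple_union_le hd hn
    _ = rhoCount (powerResidueParts d) n := by
        rw [Set.union_sdiff_cancel (triple_subset_powerResidueParts d)]

theorem stmt15 (d n : ℕ) (hd : 31 ≤ d) (hn : d + 2 ≤ n) :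
    congMinusCount (d - 3) 1 n ≤
      rhoCount {m : ℕ | 0 < m ∧ (m ≡ 1 [MOD 2 * d] ∨
        ∃ j, 1 ≤ j ∧ j ≤ 4 ∧ m ≡ d + 2 ^ j [MOD 2 * d])} n :=
  stmt15_general d n (by omega) (by omega)
end

section
/- For all integers a ≥ 5, all integers k ≥ 2^{a+3} − 1, and all integers m with 1 ≤ m ≤ 5k + 1, one has q_k^{(1)}(m) ≥ ρ(T_{a,k}; m). -/
/-!
The partitions `{n}` and `{i, n - i}` with `1 ≤ i ≤ (n - k) / 2` give
`(n - k) / 2 + 1 ≤ q_k^{(1)}(n)`. On the other side, a partition is determined by its parts other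
than `1`, and the elements of `T_{a,k}` other than `1` exceed `k`, so there are few such parts.
For `n < 2 * k` there is at most one, of the form `k + e`; as the offsets `e` are even, it can be
chosen in at most `(n - k) / 2` ways. For `2 * k ≤ n ≤ 5 * k + 1` the number of choices is bounded
by a polynomial in the number of offsets: either all these parts are less than `3 * k`, and there
are at most four, or one of them is greater than `3 * k` and leaves room for at most one more.
Since `k` is exponential in the number of offsets, `(n - k) / 2 + 1` exceeds this polynomial.
-/

open Finset

theorem card_le_gapCount_s16 {d a n : ℕ} (ha : 0 < a) (F : Finset (Multiset ℕ))
    (hF : ∀ s ∈ F, s.sum = n ∧ (∀ x ∈ s, a ≤ x) ∧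
      (s.sort (· ≤ ·)).IsChain fun x y => x + d ≤ y) :
    #F ≤ gapCount d a n := by
  let toPartition : F → {p : n.Partition // (∀ x ∈ p.parts, a ≤ x) ∧
      (p.parts.sort (· ≤ ·)).IsChain fun x y => x + d ≤ y} := fun s =>
    ⟨⟨s, fun hx => ha.trans_le ((hF s s.2).2.1 _ hx), (hF s s.2).1⟩, (hF s s.2).2⟩
  have hinj : Function.Injective toPartition := fun s t hst =>
    Subtype.ext (congrArg (fun p => p.1.parts) hst)
  exact (Nat.card_eq_finsetCard F).symm.trans_le (Nat.card_le_card_of_injective toPartition hinj)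

theorem sort_pair {α : Type*} [LinearOrder α] {x y : α} (h : x ≤ y) :
    ({x, y} : Multiset α).sort (· ≤ ·) = [x, y] := by
  rw [Multiset.insert_eq_cons, Multiset.sort_cons _ _ _ (by simpa using h),
    Multiset.sort_singleton]

theorem half_sub_add_one_le_gapCount {d n : ℕ} (hn : 0 < n) :
    (n - d) / 2 + 1 ≤ gapCount d 1 n := by
  let pairs : Finset (Multiset ℕ) := (Icc 1 ((n - d) / 2)).image fun i => {i, n - i}
  have hpairs : #pairs = (n - d) / 2 := by
    rw [card_image_of_injOn, Nat.card_Icc, Nat.add_sub_cancel]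
    intro i hi j hj (hij : ({i, n - i} : Multiset ℕ) = {j, n - j})
    have hmem : i ∈ ({j, n - j} : Multiset ℕ) := hij ▸ Multiset.mem_cons_self i _
    simp only [Multiset.insert_eq_cons, Multiset.mem_cons, Multiset.mem_singleton] at hmem
    simp only [coe_Icc, Set.mem_Icc] at hi hj
    omega
  have hsingle : {n} ∉ pairs := fun h => by
    obtain ⟨i, -, hi⟩ := mem_image.mp h
    simpa using congrArg Multiset.card hi
  rw [← hpairs, ← card_insert_of_notMem hsingle]
  refine card_le_gapCount_s16 one_pos _ fun s hs => ?_
  rcases mem_insert.mp hs with rfl | hs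
  · simpa [Nat.one_le_iff_ne_zero] using hn.ne'
  · obtain ⟨i, hi, rfl⟩ := mem_image.mp hs
    rw [mem_Icc] at hi
    rw [sort_pair (by omega)]
    simp only [Multiset.insert_eq_cons, Multiset.sum_cons, Multiset.sum_singleton,
      Multiset.mem_cons, Multiset.mem_singleton, forall_eq_or_imp, forall_eq,
      List.isChain_pair]
    omega

theorem replicate_count_add_filter_ne {α : Type*} [DecidableEq α] (s : Multiset α) (c : α) :
    Multiset.replicate (s.count c) c + s.filter (· ≠ c) = s := by
  rw [← Multiset.filter_eq', Multiset.filter_add_not]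

theorem count_mul_add_sum_filter_ne (s : Multiset ℕ) (c : ℕ) :
    s.count c * c + (s.filter (· ≠ c)).sum = s.sum := by
  conv_rhs => rw [← replicate_count_add_filter_ne s c]
  rw [Multiset.sum_add, Multiset.sum_replicate, smul_eq_mul]

theorem multiset_eq_of_filter_ne_eq {c : ℕ} (hc : c ≠ 0) {s t : Multiset ℕ}
    (hsum : s.sum = t.sum) (hne : s.filter (· ≠ c) = t.filter (· ≠ c)) : s = t := by
  have hcount : s.count c * c = t.count c * c := by
    rwa [← count_mul_add_sum_filter_ne s c, ← count_mul_add_sum_filter_ne t c, hne,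
      Nat.add_right_cancel_iff] at hsum
  rw [← replicate_count_add_filter_ne s c, ← replicate_count_add_filter_ne t c, hne,
    Nat.eq_of_mul_eq_mul_right (Nat.pos_of_ne_zero hc) hcount]

theorem rhoCount_le_card {c n : ℕ} (hc : c ≠ 0) {R : Set ℕ} (F : Finset (Multiset ℕ))
    (hF : ∀ s : Multiset ℕ, (∀ x ∈ s, x ∈ R ∧ x ≠ c) → s.sum ≤ n → s ∈ F) :
    rhoCount R n ≤ #F := by
  let dropPart : {p : n.Partition // ∀ x ∈ p.parts, x ∈ R} → F := fun p =>
    ⟨p.1.parts.filter (· ≠ c), hF _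
      (fun x hx => ⟨p.2 x (Multiset.mem_of_mem_filter hx), (Multiset.mem_filter.mp hx).2⟩)
      ((Nat.le_add_left _ _).trans_eq
        ((count_mul_add_sum_filter_ne _ c).trans p.1.parts_sum))⟩
  have hinj : Function.Injective dropPart := fun p q hpq =>
    Subtype.ext <| Nat.Partition.ext <| multiset_eq_of_filter_ne_eq hc
      (p.1.parts_sum.trans q.1.parts_sum.symm) (congrArg Subtype.val hpq)
  exact (Nat.card_le_card_of_injective dropPart hinj).trans_eq (Nat.card_eq_finsetCard F)

/-- The multisets with at most `n` elements, all of them in `S`. They are enumerated by their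
cardinality `i` through Mathlib's symmetric powers `Sym S i`. -/
def multisetsCardLE {α : Type*} [DecidableEq α] (S : Finset α) (n : ℕ) : Finset (Multiset α) :=
  (range (n + 1)).biUnion fun i =>
    (univ : Finset (Sym S i)).image fun t => t.1.map Subtype.val

section multisetsCardLE

variable {α : Type*} [DecidableEq α]

theorem mem_multisetsCardLE {S : Finset α} {n : ℕ} {s : Multiset α}
    (hS : ∀ x ∈ s, x ∈ S) (hn : s.card ≤ n) : s ∈ multisetsCardLE S n := by
  lift s to Multiset S using hS
  rw [Multiset.card_map] at hn
  exact mem_biUnion.mpr ⟨s.card, by simpa [Nat.lt_succ_iff] using hn,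
    mem_image.mpr ⟨⟨s, rfl⟩, mem_univ _, rfl⟩⟩

theorem card_multisetsCardLE_le (S : Finset α) (n : ℕ) :
    #(multisetsCardLE S n) ≤ (#S + n).choose n := by
  calc #(multisetsCardLE S n)
      ≤ ∑ i ∈ range (n + 1), Fintype.card (Sym S i) :=
        card_biUnion_le.trans (sum_le_sum fun i _ => card_image_le)
    _ = (#S + n).choose n := by
        simp_rw [Sym.card_sym_eq_multichoose, Fintype.card_coe]
        rw [Nat.sum_range_multichoose, add_comm, Nat.choose_symm_add]

theorem mem_multisetsCardLE_of_sum_lt {S : Finset ℕ} {c n : ℕ} {s : Multiset ℕ}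
    (hc : ∀ x ∈ S, c ≤ x) (hS : ∀ x ∈ s, x ∈ S) (hsum : s.sum < (n + 1) * c) :
    s ∈ multisetsCardLE S n := by
  refine mem_multisetsCardLE hS (Nat.lt_succ_iff.mp (lt_of_mul_lt_mul_right ?_ c.zero_le))
  calc s.card * c ≤ s.sum := by simpa using Multiset.card_nsmul_le_sum fun x hx => hc x (hS x hx)
    _ < (n + 1) * c := hsum

end multisetsCardLE

/-- The numbers congruent modulo `2 * k` to `1` or to `k + e` for some offset `e ∈ E`. The set
`T_{r,k}` consists of the positive ones for the offsets `2, 4, …, 2 ^ (r - 1)`. -/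
def offsetResidues (k : ℕ) (E : Finset ℕ) : Set ℕ :=
  {x | x ≡ 1 [MOD 2 * k] ∨ ∃ e ∈ E, x ≡ k + e [MOD 2 * k]}

/-- The elements other than `1` of the first period of `offsetResidues k E`, namely
`2 * k + 1` and `k + e` for `e ∈ E`. -/
def lowParts (k : ℕ) (E : Finset ℕ) : Finset ℕ :=
  insert (2 * k + 1) (E.image (k + ·))

/-- The second period of `offsetResidues k E`. -/
def highParts (k : ℕ) (E : Finset ℕ) : Finset ℕ :=
  (lowParts k E).image (· + 2 * k)

section offsetResidues

variable {k m x : ℕ} {E : Finset ℕ} {R : Set ℕ}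

theorem card_lowParts_le (k : ℕ) (E : Finset ℕ) : #(lowParts k E) ≤ #E + 1 :=
  (card_insert_le _ _).trans (Nat.add_le_add_right card_image_le 1)

theorem mem_lowParts : x ∈ lowParts k E ↔ x = 2 * k + 1 ∨ ∃ e ∈ E, k + e = x := by
  simp [lowParts]

theorem add_two_le_of_mem_lowParts (hk : 0 < k) (hE : E ⊆ Ico 2 k) (hx : x ∈ lowParts k E) :
    k + 2 ≤ x := by
  rcases mem_lowParts.mp hx with rfl | ⟨e, he, rfl⟩
  · omega
  · have := mem_Ico.mp (hE he)
    omega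

theorem three_mul_add_two_le_of_mem_highParts (hk : 0 < k) (hE : E ⊆ Ico 2 k)
    (hx : x ∈ highParts k E) : 3 * k + 2 ≤ x := by
  obtain ⟨y, hy, rfl⟩ := mem_image.mp hx
  have := add_two_le_of_mem_lowParts hk hE hy
  omega

theorem eq_or_eq_add_or_eq_add_two_mul_of_modEq {b n x : ℕ} (h : x ≡ b [MOD n]) (hb : b < n)
    (hx : x < b + 3 * n) : x = b ∨ x = b + n ∨ x = b + 2 * n := by
  have hdiv := Nat.div_add_mod x n
  rw [h, Nat.mod_eq_of_lt hb] at hdiv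
  have hlt : x / n < 3 := Nat.lt_of_mul_lt_mul_left (a := n) (by omega)
  interval_cases x / n <;> omega

theorem mem_lowParts_union_highParts (hk : 0 < k) (hE : E ⊆ Ico 2 k)
    (hx : x ∈ offsetResidues k E) (hx1 : x ≠ 1) (hxk : x ≤ 5 * k + 1) :
    x ∈ lowParts k E ∪ highParts k E := by
  simp only [highParts, mem_union, mem_image, mem_lowParts]
  rcases hx with h | ⟨e, he, h⟩
  · rcases eq_or_eq_add_or_eq_add_two_mul_of_modEq h (by omega) (by omega) with h | h | h
    · exact absurd h hx1
    · exact .inl (.inl (by omega))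
    · exact .inr ⟨2 * k + 1, .inl rfl, by omega⟩
  · have := mem_Ico.mp (hE he)
    rcases eq_or_eq_add_or_eq_add_two_mul_of_modEq h (by omega) (by omega) with h | h | h
    · exact .inl (.inr ⟨e, he, h.symm⟩)
    · exact .inr ⟨k + e, .inr ⟨e, he, rfl⟩, h.symm⟩
    · omega

theorem rhoCount_le_card_of_forall_mem_union (hk : 0 < k) (hE : E ⊆ Ico 2 k)
    (hR : R ⊆ offsetResidues k E) (hm : m ≤ 5 * k + 1) (F : Finset (Multiset ℕ))
    (hF : ∀ s : Multiset ℕ, (∀ x ∈ s, x ∈ lowParts k E ∪ highParts k E) → s.sum ≤ m → s ∈ F) :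
    rhoCount R m ≤ #F :=
  rhoCount_le_card one_ne_zero F fun s hs hsum => hF s (fun x hx =>
    mem_lowParts_union_highParts hk hE (hR (hs x hx).1) (hs x hx).2
      ((Multiset.le_sum_of_mem hx).trans (hsum.trans hm))) hsum

theorem mem_lowParts_of_mem_union (hk : 0 < k) (hE : E ⊆ Ico 2 k)
    (hx : x ∈ lowParts k E ∪ highParts k E) (hx3 : x < 3 * k + 2) : x ∈ lowParts k E :=
  (mem_union.mp hx).resolve_right fun h =>
    hx3.not_ge (three_mul_add_two_le_of_mem_highParts hk hE h)

theorem rhoCount_le_of_lt_two_mul (hk : 0 < k) (hE : E ⊆ Ico 2 k) (hEven : ∀ e ∈ E, Even e)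
    (hR : R ⊆ offsetResidues k E) (hm : m < 2 * k) :
    rhoCount R m ≤ (m - k) / 2 + 1 := by
  let S : Finset ℕ := {e ∈ E | e ≤ m - k}.image (k + ·)
  have hS : ∀ x ∈ S, k ≤ x := fun x hx => by
    obtain ⟨e, -, rfl⟩ := mem_image.mp hx
    exact Nat.le_add_right k e
  have hScard : #S ≤ (m - k) / 2 := by
    rw [← Nat.Ioc_filter_dvd_card_eq_div]
    refine card_image_le.trans (card_le_card fun e he => ?_)
    obtain ⟨heE, hem⟩ := mem_filter.mp he
    have := mem_Ico.mp (hE heE)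
    exact mem_filter.mpr ⟨mem_Ioc.mpr ⟨by omega, hem⟩, (hEven e heE).two_dvd⟩
  calc rhoCount R m ≤ #(multisetsCardLE S 1) := by
        refine rhoCount_le_card_of_forall_mem_union hk hE hR (by omega) _ fun s hs hsum =>
          mem_multisetsCardLE_of_sum_lt hS (fun x hx => ?_) (by omega)
        have hxm : x ≤ m := (Multiset.le_sum_of_mem hx).trans hsum
        rcases mem_lowParts.mp (mem_lowParts_of_mem_union hk hE (hs x hx) (by omega)) with
          rfl | ⟨e, he, rfl⟩
        · omega
        · exact mem_image_of_mem _ (mem_filter.mpr ⟨he, by omega⟩)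
    _ ≤ #S + 1 := by simpa using card_multisetsCardLE_le S 1
    _ ≤ (m - k) / 2 + 1 := Nat.add_le_add_right hScard 1

theorem rhoCount_le_of_lt_three_mul (hk : 0 < k) (hE : E ⊆ Ico 2 k)
    (hR : R ⊆ offsetResidues k E) (hm : m < 3 * k) :
    rhoCount R m ≤ (#E + 3).choose 2 :=
  calc rhoCount R m ≤ #(multisetsCardLE (lowParts k E) 2) := by
        refine rhoCount_le_card_of_forall_mem_union hk hE hR (by omega) _ fun s hs hsum =>
          mem_multisetsCardLE_of_sum_lt (fun x hx => add_two_le_of_mem_lowParts hk hE hx)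
            (fun x hx => mem_lowParts_of_mem_union hk hE (hs x hx) ?_) (by omega)
        have := Multiset.le_sum_of_mem hx
        omega
    _ ≤ (#(lowParts k E) + 2).choose 2 := card_multisetsCardLE_le _ 2
    _ ≤ (#E + 3).choose 2 :=
        Nat.choose_le_choose 2 (Nat.add_le_add_right (card_lowParts_le k E) 2)

theorem exists_cons_of_mem_highParts (hk : 0 < k) (hE : E ⊆ Ico 2 k) {s : Multiset ℕ}
    (hs : ∀ x ∈ s, x ∈ lowParts k E ∪ highParts k E) (hsum : s.sum ≤ 5 * k + 1)
    (hx : x ∈ s) (hxH : x ∈ highParts k E) :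
    ∃ t ∈ multisetsCardLE (lowParts k E) 1, x ::ₘ t = s := by
  obtain ⟨t, rfl⟩ := Multiset.exists_cons_of_mem hx
  have hx3 := three_mul_add_two_le_of_mem_highParts hk hE hxH
  rw [Multiset.sum_cons] at hsum
  refine ⟨t, mem_multisetsCardLE_of_sum_lt (fun y hy => add_two_le_of_mem_lowParts hk hE hy)
    (fun y hy => mem_lowParts_of_mem_union hk hE (hs y (Multiset.mem_cons_of_mem hy)) ?_)
    (by omega), rfl⟩
  have := Multiset.le_sum_of_mem hy
  omega

theorem rhoCount_le_of_le_five_mul_add_one (hk : 0 < k) (hE : E ⊆ Ico 2 k)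
    (hR : R ⊆ offsetResidues k E) (hm : m ≤ 5 * k + 1) :
    rhoCount R m ≤ (#E + 5).choose 4 + (#E + 1) * (#E + 2) := by
  let L := lowParts k E
  let withHigh : Finset (Multiset ℕ) :=
    image₂ Multiset.cons (highParts k E) (multisetsCardLE L 1)
  have hL : #L ≤ #E + 1 := card_lowParts_le k E
  have hlow : #(multisetsCardLE L 4) ≤ (#E + 5).choose 4 :=
    (card_multisetsCardLE_le L 4).trans (Nat.choose_le_choose 4 (by omega))
  have hhigh : #withHigh ≤ (#E + 1) * (#E + 2) := by
    refine (card_image₂_le _ _ _).trans (Nat.mul_le_mul (card_image_le.trans hL) ?_)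
    refine (card_multisetsCardLE_le L 1).trans ?_
    rw [Nat.choose_one_right]
    omega
  calc rhoCount R m ≤ #(multisetsCardLE L 4 ∪ withHigh) := by
        refine rhoCount_le_card_of_forall_mem_union hk hE hR hm _ fun s hs hsum => ?_
        by_cases hs_high : ∃ x ∈ s, x ∈ highParts k E
        · obtain ⟨x, hx, hxH⟩ := hs_high
          obtain ⟨t, ht, rfl⟩ := exists_cons_of_mem_highParts hk hE hs (hsum.trans hm) hx hxH
          exact mem_union_right _ (mem_image₂_of_mem hxH ht)
        · push Not at hs_high
          exact mem_union_left _ <| mem_multisetsCardLE_of_sum_lt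
            (fun x hx => add_two_le_of_mem_lowParts hk hE hx)
            (fun x hx => (mem_union.mp (hs x hx)).resolve_right (hs_high x hx)) (by omega)
    _ ≤ (#E + 5).choose 4 + (#E + 1) * (#E + 2) :=
        (card_union_le _ _).trans (Nat.add_le_add hlow hhigh)

theorem two_mul_choose_two_le (r : ℕ) :
    2 * (r + 3).choose 2 ≤ (r + 5).choose 4 + (r + 1) * (r + 2) := by
  induction r with
  | zero => decide
  | succ r ih =>
    have htwo : (r + 4).choose 2 = (r + 3).choose 2 + (r + 3) := by
      rw [Nat.choose_succ_succ', Nat.choose_one_right, add_comm]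
    have hfour : (r + 6).choose 4 = (r + 5).choose 4 + (r + 5).choose 3 := by
      rw [Nat.choose_succ_succ', add_comm]
    have hthree : 2 ≤ (r + 5).choose 3 :=
      le_trans (by decide) (Nat.choose_le_choose 3 (Nat.le_add_left 5 r))
    rw [htwo, hfour]
    linarith

theorem rhoCount_le_gapCount (hE : E ⊆ Ico 2 k) (hEven : ∀ e ∈ E, Even e)
    (hR : R ⊆ offsetResidues k E) (hk : (#E + 5).choose 4 + (#E + 1) * (#E + 2) ≤ k + 1)
    (hm0 : 0 < m) (hm : m ≤ 5 * k + 1) :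
    rhoCount R m ≤ gapCount k 1 m := by
  have hpair := two_mul_choose_two_le #E
  have hchoose : 3 ≤ (#E + 3).choose 2 := Nat.choose_le_choose 2 (Nat.le_add_left 3 #E)
  have hk0 : 0 < k := by omega
  refine le_trans ?_ (half_sub_add_one_le_gapCount hm0)
  rcases lt_or_ge m (2 * k) with h2 | h2
  · exact rhoCount_le_of_lt_two_mul hk0 hE hEven hR h2
  rcases lt_or_ge m (3 * k) with h3 | h3
  · exact (rhoCount_le_of_lt_three_mul hk0 hE hR h3).trans (by omega)
  · exact (rhoCount_le_of_le_five_mul_add_one hk0 hE hR hm).trans (by omega)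

end offsetResidues

theorem choose_four_add_mul_le_two_pow (r : ℕ) :
    (r + 5).choose 4 + (r + 1) * (r + 2) ≤ 2 ^ (r + 4) := by
  rcases lt_or_ge r 3 with hr | hr
  · interval_cases r <;> decide
  induction r, hr using Nat.le_induction with
  | base => decide
  | succ r hr ih =>
    have hchoose : (r + 5).choose 3 ≤ (r + 5).choose 4 :=
      Nat.choose_le_succ_of_lt_half_left (by omega)
    calc (r + 6).choose 4 + (r + 2) * (r + 3)
        = (r + 5).choose 3 + (r + 5).choose 4 + (r + 2) * (r + 3) := by
          rw [Nat.choose_succ_succ']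
      _ ≤ 2 * ((r + 5).choose 4 + (r + 1) * (r + 2)) := by nlinarith
      _ ≤ 2 * 2 ^ (r + 4) := Nat.mul_le_mul_left 2 ih
      _ = 2 ^ (r + 5) := (pow_succ' 2 (r + 4)).symm

theorem stmt16_general (r k m : ℕ) (hrk : 2 ^ r < k)
    (hk : (r + 5).choose 4 + (r + 1) * (r + 2) ≤ k + 1) (hm0 : 0 < m) (hm : m ≤ 5 * k + 1) :
    rhoCount {x : ℕ | 0 < x ∧ (x ≡ 1 [MOD 2 * k] ∨
      ∃ j, 1 ≤ j ∧ j ≤ r ∧ x ≡ k + 2 ^ j [MOD 2 * k])} m ≤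
    gapCount k 1 m := by
  let E : Finset ℕ := (Icc 1 r).image (2 ^ ·)
  have hcard : #E = r := by
    rw [card_image_of_injective _ (Nat.pow_right_injective le_rfl), Nat.card_Icc,
      Nat.add_sub_cancel]
  have hEven : ∀ e ∈ E, Even e := forall_mem_image.mpr fun j hj =>
    Nat.even_pow.mpr ⟨even_two, Nat.one_le_iff_ne_zero.mp (mem_Icc.mp hj).1⟩
  have hE : E ⊆ Ico 2 k := image_subset_iff.mpr fun j hj => by
    obtain ⟨h1, hr⟩ := mem_Icc.mp hj
    exact mem_Ico.mpr ⟨Nat.le_self_pow (by omega) 2,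
      (Nat.pow_le_pow_right two_pos hr).trans_lt hrk⟩
  refine rhoCount_le_gapCount hE hEven ?_ (hcard.symm ▸ hk) hm0 hm
  rintro x ⟨-, h | ⟨j, h1, hr, h⟩⟩
  · exact .inl h
  · exact .inr ⟨2 ^ j, mem_image_of_mem _ (mem_Icc.mpr ⟨h1, hr⟩), h⟩

theorem stmt16 (a k m : ℕ) (ha : 5 ≤ a) (hk : 2 ^ (a + 3) - 1 ≤ k)
    (hm1 : 1 ≤ m) (hm2 : m ≤ 5 * k + 1) :
    rhoCount {x : ℕ | 0 < x ∧ (x ≡ 1 [MOD 2 * k] ∨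
      ∃ j, 1 ≤ j ∧ j ≤ a - 1 ∧ x ≡ k + 2 ^ j [MOD 2 * k])} m ≤
    gapCount k 1 m := by
  obtain ⟨r, rfl⟩ := Nat.exists_eq_add_of_le' (Nat.one_le_of_lt ha)
  have hpow := choose_four_add_mul_le_two_pow r
  have hsucc : 2 ^ (r + 4) = 16 * 2 ^ r := by ring
  rw [show r + 1 + 3 = r + 4 by ring] at hk
  exact stmt16_general r k m (by have := Nat.two_pow_pos r; omega) (by omega) hm1 hm2
end

section
/- Let a and d be positive integers with d ≥ 4, 1 ≤ a < d + 3, and gcd(a, d + 3) = 1. Then q_d^{(a)}(n) − Q_d^{(a)}(n) tends to +∞ as n → ∞; that is, for every M there exists N such that for all n ≥ N, q_d^{(a)}(n) ≥ Q_d^{(a)}(n) + M. -/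
/-!
Both counting functions grow like `exp (c √n)`, and the constant `c` is larger for `gapCount`.
Bounding each coefficient of the generating function of `congCount` by its value at `x = e⁻ᵗ`, with
`t` at the saddle point, gives every rate above `2π / √(3(d + 3))`, since a residue class modulo `m`
contributes about `π² / (6mt)` to the logarithm of the product. For `gapCount` it suffices to count
the partitions into about `κ √n` parts: removing the least admissible staircase leaves a partition
of the excess `N` into at most `k + 1` parts, and there are at least `N ^ k / ((k + 1)! k!)` of
them. With `κ = √(2 / (3d))` this gives every rate below `√(2 / (3d)) (2 + log d)`, which exceeds
`2π / √(3(d + 3))` once `d ≥ 4`.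
-/

open Real Filter Topology Finset
open scoped Nat

theorem prod_pow_pow_count {M : Type*} [CommMonoid M] (x : M) {s : Multiset ℕ} {T : Finset ℕ}
    (hs : s.toFinset ⊆ T) : ∏ j ∈ T, (x ^ j) ^ s.count j = x ^ s.sum := by
  simp only [sum_multiset_count_of_subset s T hs, ← pow_mul, mul_comm, prod_pow_eq_pow_sum,
    smul_eq_mul]

theorem sum_piFinset_prod_pow_pow_le {x : ℝ} (hx0 : 0 ≤ x) (hx1 : x < 1) {T : Finset ℕ}
    (hT : 0 ∉ T) (n : ℕ) :
    ∑ f ∈ Fintype.piFinset fun _ : T => range n, ∏ j : T, (x ^ j.1) ^ f j ≤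
      ∏ j ∈ T, (1 - x ^ j)⁻¹ := by
  have geom (j : T) : ∑ i ∈ range n, (x ^ j.1) ^ i ≤ (1 - x ^ j.1)⁻¹ := by
    rw [range_eq_Ico]
    simpa only [pow_zero, one_div] using geom_sum_Ico_le_of_lt_one (m := 0) (n := n)
      (pow_nonneg hx0 j.1) (pow_lt_one₀ hx0 hx1 (ne_of_mem_of_not_mem j.2 hT))
  calc ∑ f ∈ Fintype.piFinset fun _ : T => range n, ∏ j : T, (x ^ j.1) ^ f j
      = ∏ j : T, ∑ i ∈ range n, (x ^ j.1) ^ i :=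
        sum_prod_piFinset _ fun (j : T) i => (x ^ j.1) ^ i
    _ ≤ ∏ j : T, (1 - x ^ j.1)⁻¹ := prod_le_prod (fun j _ => by positivity) fun j _ => geom j
    _ = ∏ j ∈ T, (1 - x ^ j)⁻¹ := prod_coe_sort T fun j => (1 - x ^ j)⁻¹

theorem rhoCount_mul_pow_le {x : ℝ} (hx0 : 0 ≤ x) (hx1 : x < 1) (R : Set ℕ)
    [DecidablePred (· ∈ R)] (n : ℕ) :
    (rhoCount R n : ℝ) * x ^ n ≤ ∏ j ∈ Icc 1 n with j ∈ R, (1 - x ^ j)⁻¹ := by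
  set T := {j ∈ Icc 1 n | j ∈ R} with hT
  let P := {p : n.Partition // ∀ j ∈ p.parts, j ∈ R}
  have parts_subset (p : P) : p.1.parts.toFinset ⊆ T := by
    intro j hj
    have hj' : j ∈ p.1.parts := Multiset.mem_toFinset.1 hj
    exact mem_filter.2 ⟨mem_Icc.2 ⟨p.1.parts_pos hj', p.1.le_of_mem_parts hj'⟩, p.2 j hj'⟩
  let mult (p : P) (j : T) : ℕ := p.1.parts.count j.1
  have mult_injective : Function.Injective mult := by
    refine fun p q h => Subtype.ext (Nat.Partition.ext (Multiset.ext.2 fun j => ?_))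
    by_cases hj : j ∈ T
    · exact congrFun h ⟨j, hj⟩
    · rw [Multiset.count_eq_zero.2 fun hp => hj (parts_subset p (Multiset.mem_toFinset.2 hp)),
        Multiset.count_eq_zero.2 fun hq => hj (parts_subset q (Multiset.mem_toFinset.2 hq))]
  have mult_mem (p : P) : mult p ∈ Fintype.piFinset fun _ : T => range (n + 1) := by
    refine Fintype.mem_piFinset.2 fun j => mem_range_succ_iff.2 ?_
    calc p.1.parts.count j.1 ≤ p.1.parts.card := Multiset.count_le_card _ _
      _ ≤ p.1.parts.sum := by
        simpa using Multiset.card_nsmul_le_sum (a := 1) fun j hj => p.1.parts_pos hj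
      _ = n := p.1.parts_sum
  have weight (p : P) : ∏ j : T, (x ^ j.1) ^ mult p j = x ^ n := by
    rw [prod_coe_sort T fun j => (x ^ j) ^ p.1.parts.count j,
      prod_pow_pow_count x (parts_subset p), p.1.parts_sum]
  calc (rhoCount R n : ℝ) * x ^ n = ∑ p : P, ∏ j : T, (x ^ j.1) ^ mult p j := by
        rw [sum_congr rfl fun p _ => weight p, sum_const, card_univ, nsmul_eq_mul, rhoCount,
          Nat.card_eq_fintype_card]
    _ = ∑ f ∈ univ.map ⟨mult, mult_injective⟩, ∏ j : T, (x ^ j.1) ^ f j := by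
        simp only [sum_map, Function.Embedding.coeFn_mk]
    _ ≤ ∑ f ∈ Fintype.piFinset fun _ : T => range (n + 1), ∏ j : T, (x ^ j.1) ^ f j := by
        refine sum_le_sum_of_subset_of_nonneg ?_ fun f _ _ => by positivity
        simpa [subset_iff] using mult_mem
    _ ≤ ∏ j ∈ T, (1 - x ^ j)⁻¹ := sum_piFinset_prod_pow_pow_le hx0 hx1 (by simp [hT]) _

/-- The function `-log (1 - e⁻ˢ)`. At `x = e⁻ᵗ`, the part `j` contributes `eulerLog (j * t)` to the
logarithm of the generating function `∏ (1 - x ^ j)⁻¹` of partitions. -/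
noncomputable def eulerLog (s : ℝ) : ℝ := -log (1 - exp (-s))

theorem one_sub_exp_neg_pos {s : ℝ} (hs : 0 < s) : 0 < 1 - exp (-s) :=
  sub_pos.2 (exp_lt_one_iff.2 (neg_lt_zero.2 hs))

theorem exp_eulerLog {s : ℝ} (hs : 0 < s) : exp (eulerLog s) = (1 - exp (-s))⁻¹ := by
  rw [eulerLog, Real.exp_neg (log _), exp_log (one_sub_exp_neg_pos hs)]

theorem eulerLog_nonneg {s : ℝ} (hs : 0 ≤ s) : 0 ≤ eulerLog s :=
  neg_nonneg.2 (log_nonpos (sub_nonneg.2 (exp_le_one_iff.2 (neg_nonpos.2 hs)))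
    (sub_le_self _ (exp_pos _).le))

theorem antitoneOn_eulerLog : AntitoneOn eulerLog (Set.Ioi 0) := fun _ hs _ _ hsu =>
  neg_le_neg (log_le_log (one_sub_exp_neg_pos hs)
    (sub_le_sub_left (exp_le_exp.2 (neg_le_neg hsu)) 1))

theorem inv_one_sub_exp_neg_le {s : ℝ} (hs : 0 < s) : (1 - exp (-s))⁻¹ ≤ 1 + 1 / s := by
  have h : exp (-s) ≤ (1 + s)⁻¹ := by
    rw [Real.exp_neg, add_comm]
    exact inv_anti₀ (by positivity) (add_one_le_exp s)
  calc (1 - exp (-s))⁻¹ ≤ (1 - (1 + s)⁻¹)⁻¹ :=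
        inv_anti₀ (sub_pos.2 (inv_lt_one_of_one_lt₀ (by linarith))) (by linarith)
    _ = 1 + 1 / s := by
        rw [show 1 - (1 + s)⁻¹ = s / (1 + s) by field_simp; ring, inv_div, add_div,
          div_self hs.ne', add_comm]

theorem sum_range_exp_neg_mul_le {s : ℝ} (hs : 0 < s) (n : ℕ) :
    ∑ i ∈ range n, exp (-((i + 1 : ℕ) * s)) ≤ 1 / s := by
  calc ∑ i ∈ range n, exp (-((i + 1 : ℕ) * s)) = ∑ i ∈ Ico 1 (n + 1), exp (-s) ^ i := by
        simp only [sum_Ico_eq_sum_range, add_tsub_cancel_right, ← exp_nat_mul, mul_neg,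
          add_comm 1]
    _ ≤ exp (-s) ^ 1 / (1 - exp (-s)) :=
        geom_sum_Ico_le_of_lt_one (exp_pos _).le (exp_lt_one_iff.2 (neg_lt_zero.2 hs))
    _ = (1 - exp (-s))⁻¹ - 1 := by
        have := (one_sub_exp_neg_pos hs).ne'
        field_simp
        ring
    _ ≤ 1 / s := by linarith [inv_one_sub_exp_neg_le hs]

-- Expand each logarithm in powers of `e⁻ˢ` and sum over `i` first: the `k`-th powers form a
-- geometric series, so they contribute at most `1 / (k ^ 2 * s)`.
theorem sum_range_eulerLog_le {s : ℝ} (hs : 0 < s) (n : ℕ) :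
    ∑ i ∈ range n, eulerLog ((i + 1 : ℕ) * s) ≤ π ^ 2 / 6 * (1 / s) := by
  have expansion : HasSum (fun k : ℕ => ∑ i ∈ range n, exp (-((i + 1 : ℕ) * s)) ^ (k + 1) / (k + 1))
      (∑ i ∈ range n, eulerLog ((i + 1 : ℕ) * s)) := by
    refine hasSum_sum fun i _ => hasSum_pow_div_log_of_abs_lt_one ?_
    rw [abs_exp]
    exact exp_lt_one_iff.2 (neg_lt_zero.2 (by positivity))
  have zeta : HasSum (fun k : ℕ => 1 / ((k + 1 : ℕ) : ℝ) ^ 2) (π ^ 2 / 6) := by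
    simpa using (hasSum_nat_add_iff' (f := fun k : ℕ => 1 / (k : ℝ) ^ 2) 1).2 hasSum_zeta_two
  refine hasSum_le (fun k => ?_) expansion (zeta.mul_right (1 / s))
  calc ∑ i ∈ range n, exp (-((i + 1 : ℕ) * s)) ^ (k + 1) / (k + 1)
      = (∑ i ∈ range n, exp (-((i + 1 : ℕ) * ((k + 1 : ℕ) * s)))) / (k + 1) := by
        rw [sum_div]
        refine sum_congr rfl fun i _ => ?_
        rw [← exp_nat_mul]
        ring_nf
    _ ≤ 1 / ((k + 1 : ℕ) * s) / (k + 1) := by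
        gcongr
        exact sum_range_exp_neg_mul_le (by positivity) n
    _ = 1 / ((k + 1 : ℕ) : ℝ) ^ 2 * (1 / s) := by
        push_cast
        field_simp

theorem eventually_one_add_div_pow_le_exp {β δ : ℝ} (hβ : 0 < β) (hδ : 0 < δ) (k : ℕ) :
    ∀ᶠ s : ℝ in atTop, (1 + s / β) ^ k ≤ exp (δ * s) := by
  have arg_lim : Tendsto (fun s : ℝ => 1 + s / β) atTop atTop :=
    tendsto_atTop_add_const_left _ _ (tendsto_id.atTop_div_const hβ)
  have pow_isLittleO := isLittleO_pow_exp_pos_mul_atTop k (mul_pos hδ hβ)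
  filter_upwards [arg_lim.eventually (pow_isLittleO.bound (exp_pos (-(δ * β))))] with s hs
  calc (1 + s / β) ^ k ≤ ‖(1 + s / β) ^ k‖ := le_norm_self _
    _ ≤ exp (-(δ * β)) * exp (δ * β * (1 + s / β)) := by rwa [norm_eq_abs (exp _), abs_exp] at hs
    _ = exp (δ * s) := by
      rw [← exp_add]
      congr 1
      field_simp
      ring

theorem tendsto_sqrt_natCast_atTop : Tendsto (fun n : ℕ => √(n : ℝ)) atTop atTop :=
  tendsto_sqrt_atTop.comp tendsto_natCast_atTop_atTop

section Residues

variable {m : ℕ}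

theorem injOn_div_of_natCast_eq (r : ZMod m) : Set.InjOn (· / m) {j : ℕ | (j : ZMod m) = r} := by
  intro i hi j hj hij
  have hmod : i % m = j % m := (ZMod.natCast_eq_natCast_iff i j m).1 (hi.trans hj.symm)
  rw [← Nat.div_add_mod i m, ← Nat.div_add_mod j m, hmod, show i / m = j / m from hij]

variable [NeZero m] {t : ℝ}

-- Rounding `j` down to a multiple of `m` only increases `eulerLog (j * t)`; the class has at most
-- one member below `m`, which is at least `1`.
theorem sum_eulerLog_le_of_natCast_eq (ht : 0 < t) {r : ZMod m} {T : Finset ℕ} (hpos : 0 ∉ T)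
    (hT : ∀ j ∈ T, (j : ZMod m) = r) :
    ∑ j ∈ T, eulerLog (j * t) ≤ π ^ 2 / 6 * (1 / (m * t)) + eulerLog t := by
  have hm : 0 < m := NeZero.pos m
  let g (i : ℕ) : ℝ := eulerLog ((max 1 (i * m) : ℕ) * t)
  have le_g (j : ℕ) (hj : j ∈ T) : eulerLog (j * t) ≤ g (j / m) := by
    have hj0 : 1 ≤ j := Nat.one_le_iff_ne_zero.2 (ne_of_mem_of_not_mem hj hpos)
    have hle : max 1 (j / m * m) ≤ j := max_le hj0 (Nat.div_mul_le_self j m)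
    exact antitoneOn_eulerLog (Set.mem_Ioi.2 (by positivity)) (Set.mem_Ioi.2 (by positivity))
      (by gcongr)
  have hinj : Set.InjOn (· / m) (T : Set ℕ) := (injOn_div_of_natCast_eq r).mono hT
  obtain ⟨n, hn⟩ : ∃ n, T.image (· / m) ⊆ range (n + 1) :=
    ⟨(T.image (· / m)).sup id, subset_range_sup_succ _⟩
  calc ∑ j ∈ T, eulerLog (j * t) ≤ ∑ j ∈ T, g (j / m) := sum_le_sum le_g
    _ = ∑ i ∈ T.image (· / m), g i := (sum_image hinj).symm
    _ ≤ ∑ i ∈ range (n + 1), g i :=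
        sum_le_sum_of_subset_of_nonneg hn fun i _ _ => eulerLog_nonneg (by positivity)
    _ = ∑ i ∈ range n, eulerLog ((i + 1 : ℕ) * (m * t)) + eulerLog t := by
        rw [sum_range_succ']
        congr 1
        · refine sum_congr rfl fun i _ => ?_
          have : 1 ≤ (i + 1) * m := Nat.mul_pos i.succ_pos hm
          simp only [g, max_eq_right this, Nat.cast_mul, mul_assoc]
        · simp [g]
    _ ≤ π ^ 2 / 6 * (1 / (m * t)) + eulerLog t := by
        gcongr
        exact sum_range_eulerLog_le (by positivity) n

theorem rhoCount_natCast_mem_le (ht : 0 < t) (C : Finset (ZMod m)) (n : ℕ) :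
    (rhoCount {j | (j : ZMod m) ∈ C} n : ℝ) ≤
      exp (n * t + #C * (π ^ 2 / 6 * (1 / (m * t)))) * (1 + 1 / t) ^ #C := by
  classical
  set R : Set ℕ := {j | (j : ZMod m) ∈ C}
  set T := {j ∈ Icc 1 n | j ∈ R} with hT
  have zero_notMem : 0 ∉ T := by simp [hT]
  have prod_eq : ∏ j ∈ T, (1 - exp (-t) ^ j)⁻¹ = exp (∑ j ∈ T, eulerLog (j * t)) := by
    rw [exp_sum]
    refine prod_congr rfl fun j hj => ?_
    have hj0 : 0 < j := Nat.pos_of_ne_zero (ne_of_mem_of_not_mem hj zero_notMem)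
    rw [exp_eulerLog (by positivity), ← exp_nat_mul, mul_neg]
  have sum_le : ∑ j ∈ T, eulerLog (j * t) ≤ #C * (π ^ 2 / 6 * (1 / (m * t)) + eulerLog t) := by
    rw [← sum_fiberwise_of_maps_to (g := fun j : ℕ => (j : ZMod m)) (t := C) (by simp [hT, R]),
      ← nsmul_eq_mul]
    exact sum_le_card_nsmul _ _ _ fun r _ =>
      sum_eulerLog_le_of_natCast_eq ht (fun h => zero_notMem (mem_filter.1 h).1)
        fun j hj => (mem_filter.1 hj).2
  have main := rhoCount_mul_pow_le (exp_pos (-t)).le (exp_lt_one_iff.2 (neg_lt_zero.2 ht)) R n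
  rw [prod_eq, ← exp_nat_mul, mul_neg, Real.exp_neg, ← div_eq_mul_inv,
    div_le_iff₀ (exp_pos _)] at main
  calc (rhoCount R n : ℝ) ≤ exp (∑ j ∈ T, eulerLog (j * t)) * exp (n * t) := main
    _ ≤ exp (#C * (π ^ 2 / 6 * (1 / (m * t)) + eulerLog t)) * exp (n * t) := by gcongr
    _ = exp (n * t + #C * (π ^ 2 / 6 * (1 / (m * t)))) * exp (eulerLog t) ^ #C := by
        rw [← exp_nat_mul, ← exp_add, ← exp_add]
        ring_nf
    _ ≤ exp (n * t + #C * (π ^ 2 / 6 * (1 / (m * t)))) * (1 + 1 / t) ^ #C := by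
        rw [exp_eulerLog ht]
        gcongr
        · exact (inv_pos.2 (one_sub_exp_neg_pos ht)).le
        · exact inv_one_sub_exp_neg_le ht

-- The bound of `rhoCount_natCast_mem_le` is used at the saddle point `t = β / √n`.
theorem eventually_rhoCount_natCast_mem_le {C : Finset (ZMod m)} {β ρ : ℝ} (hβ : 0 < β)
    (hC : #C * (π ^ 2 / (6 * m)) ≤ β ^ 2) (hρ : 2 * β < ρ) :
    ∀ᶠ n : ℕ in atTop, (rhoCount {j | (j : ZMod m) ∈ C} n : ℝ) ≤ exp (ρ * √n) := by
  have exponent_le {s : ℝ} (hs : 0 < s) :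
      s ^ 2 * (β / s) + #C * (π ^ 2 / 6 * (1 / (m * (β / s)))) ≤ 2 * β * s := by
    calc s ^ 2 * (β / s) + #C * (π ^ 2 / 6 * (1 / (m * (β / s))))
        = β * s + #C * (π ^ 2 / (6 * m)) * (s / β) := by field_simp
      _ ≤ β * s + β ^ 2 * (s / β) := by gcongr
      _ = 2 * β * s := by field_simp; ring
  filter_upwards [tendsto_sqrt_natCast_atTop.eventually
    ((eventually_one_add_div_pow_le_exp hβ (sub_pos.2 hρ) #C).and (eventually_gt_atTop 0))]
    with n ⟨hpoly, hs⟩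
  have sq_sqrt_n : √(n : ℝ) ^ 2 = n := sq_sqrt n.cast_nonneg
  calc (rhoCount {j | (j : ZMod m) ∈ C} n : ℝ)
      ≤ exp (√n ^ 2 * (β / √n) + #C * (π ^ 2 / 6 * (1 / (m * (β / √n))))) *
          (1 + 1 / (β / √n)) ^ #C := by
        rw [sq_sqrt_n]
        exact rhoCount_natCast_mem_le (div_pos hβ hs) C n
    _ ≤ exp (2 * β * √n) * exp ((ρ - 2 * β) * √n) := by
        rw [one_div_div]
        gcongr
        exact exponent_le hs
    _ = exp (ρ * √n) := by rw [← exp_add]; ring_nf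

end Residues

theorem congCount_eq_rhoCount (d a n : ℕ) :
    congCount d a n =
      rhoCount {j | (j : ZMod (d + 3)) ∈ ({↑a, -↑a} : Finset (ZMod (d + 3)))} n := by
  simp only [congCount, rhoCount, ← ZMod.natCast_eq_natCast_iff, Nat.cast_add, Nat.cast_zero,
    add_eq_zero_iff_eq_neg, Set.mem_ofPred_eq, mem_insert, mem_singleton]

theorem eventually_congCount_le (d a : ℕ) {ρ : ℝ} (hρ : 2 * (π / √(3 * (d + 3))) < ρ) :
    ∀ᶠ n : ℕ in atTop, (congCount d a n : ℝ) ≤ exp (ρ * √n) := by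
  simp only [congCount_eq_rhoCount]
  refine eventually_rhoCount_natCast_mem_le (by positivity) ?_ hρ
  rw [div_pow, sq_sqrt (by positivity)]
  calc (#({↑a, -↑a} : Finset (ZMod (d + 3))) : ℝ) * (π ^ 2 / (6 * (d + 3 : ℕ)))
      ≤ 2 * (π ^ 2 / (6 * (d + 3 : ℕ))) := by
        gcongr
        exact_mod_cast card_le_two
    _ = π ^ 2 / (3 * (d + 3)) := by
        push_cast
        field_simp
        ring

theorem add_pow_succ_le (b c k : ℕ) :
    (b + c) ^ (k + 1) ≤ b ^ (k + 1) + (k + 1) * c * (b + c) ^ k := by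
  have h := (le_abs_self _).trans (abs_pow_sub_pow_le ((b : ℤ) + c) b (k + 1))
  rw [add_sub_cancel_left, abs_of_nonneg (by positivity), abs_of_nonneg (by positivity),
    abs_of_nonneg (by positivity), max_eq_left (by linarith), Nat.add_sub_cancel] at h
  zify
  push_cast at h
  linarith

/-- A list of parts of a partition counted by `gapCount d a n`, in increasing order; when `a = 0`
a part `0` is allowed as well. -/
structure IsGapList (d a n : ℕ) (l : List ℕ) : Prop where
  isChain : l.IsChain (fun x y => x + d ≤ y)
  le_of_mem : ∀ x ∈ l, a ≤ x
  sum_eq : l.sum = n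

namespace IsGapList

variable {d a b n : ℕ} {l : List ℕ}

theorem mono (h : IsGapList d b n l) (hab : a ≤ b) : IsGapList d a n l :=
  ⟨h.isChain, fun x hx => hab.trans (h.le_of_mem x hx), h.sum_eq⟩

theorem singleton (h : a ≤ n) : IsGapList d a n [n] :=
  ⟨List.isChain_singleton n, by simpa using h, List.sum_singleton⟩

theorem cons (h : IsGapList d (a + d) n l) : IsGapList d a (a + n) (a :: l) where
  isChain := List.isChain_cons.2 ⟨fun y hy => h.le_of_mem y (List.mem_of_mem_head? hy), h.isChain⟩
  le_of_mem := List.forall_mem_cons.2 ⟨le_rfl, (h.mono (Nat.le_add_right a d)).le_of_mem⟩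
  sum_eq := by rw [List.sum_cons, h.sum_eq]

theorem sort_eq (h : IsGapList d a n l) : (l : Multiset ℕ).sort (· ≤ ·) = l := by
  have sorted : l.Pairwise (· ≤ ·) :=
    List.isChain_iff_pairwise.1 (h.isChain.imp fun x _ hxy => (Nat.le_add_right x d).trans hxy)
  exact List.Perm.eq_of_pairwise' (Multiset.pairwise_sort _ _) sorted
    (Multiset.coe_eq_coe.1 (Multiset.sort_eq _ _))

theorem exists_card_eq_add {S T : Finset (List ℕ)} (hS : ∀ l ∈ S, IsGapList d (a + d) n l)
    (hT : ∀ l ∈ T, IsGapList d (a + 1) (a + n) l) :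
    ∃ U : Finset (List ℕ), #U = #S + #T ∧ ∀ l ∈ U, IsGapList d a (a + n) l := by
  have disjoint : Disjoint (S.map ⟨List.cons a, List.cons_injective⟩) T := by
    refine disjoint_left.2 fun l hlS hlT => Nat.not_succ_le_self a ?_
    obtain ⟨l', -, rfl⟩ := Finset.mem_map.1 hlS
    exact (hT _ hlT).le_of_mem a List.mem_cons_self
  refine ⟨(S.map ⟨List.cons a, List.cons_injective⟩).disjUnion T disjoint,
    by rw [card_disjUnion, card_map], fun l hl => ?_⟩
  rcases mem_disjUnion.1 hl with hl | hl
  · obtain ⟨l', hl', rfl⟩ := Finset.mem_map.1 hl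
    exact (hS l' hl').cons
  · exact (hT l hl).mono (Nat.le_succ a)

theorem exists_pow_succ_le_card_mul {k N : ℕ} {S T : Finset (List ℕ)}
    (hS : ∀ l ∈ S, IsGapList d (a + d) n l) (hS_card : N ^ k ≤ #S * ((k + 1)! * k !))
    (hT : ∀ l ∈ T, IsGapList d (a + 1) (a + n) l)
    (hT_card : N ^ (k + 1) ≤ #T * ((k + 2)! * (k + 1)!) + (k + 1) * (k + 2) * N ^ k) :
    ∃ U : Finset (List ℕ), N ^ (k + 1) ≤ #U * ((k + 2)! * (k + 1)!) ∧
      ∀ l ∈ U, IsGapList d a (a + n) l := by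
  obtain ⟨U, hU_card, hU⟩ := exists_card_eq_add hS hT
  refine ⟨U, ?_, hU⟩
  calc N ^ (k + 1) ≤ #T * ((k + 2)! * (k + 1)!) + (k + 1) * (k + 2) * N ^ k := hT_card
    _ ≤ #T * ((k + 2)! * (k + 1)!) + (k + 1) * (k + 2) * (#S * ((k + 1)! * k !)) := by gcongr
    _ = #U * ((k + 2)! * (k + 1)!) := by
      rw [hU_card, Nat.factorial_succ (k + 1), Nat.factorial_succ k]
      ring

-- Induction on the number of parts and on `N`, splitting the lists according to whether the least
-- part is `a` (remove it) or larger than `a` (replace `a` by `a + 1`, which decreases `N`).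
theorem exists_pow_le_card_mul (d k : ℕ) : ∀ N a, ∃ S : Finset (List ℕ),
    N ^ k ≤ #S * ((k + 1)! * k !) ∧
      ∀ l ∈ S, IsGapList d a (N + (k + 1) * a + d * (k + 1).choose 2) l := by
  induction k with
  | zero =>
    intro N a
    refine ⟨{[N + (0 + 1) * a + d * (0 + 1).choose 2]}, by simp, fun l hl => ?_⟩
    rw [mem_singleton.1 hl]
    exact singleton (by lia)
  | succ k ih =>
    intro N
    induction N using Nat.strong_induction_on with
    | _ N ihN =>
      intro a
      have choose_eq : (k + 2).choose 2 = (k + 1) + (k + 1).choose 2 := by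
        rw [Nat.choose_succ_succ' (k + 1) 1, Nat.choose_one_right]
      have sum_eq : N + (k + 1 + 1) * a + d * (k + 1 + 1).choose 2 =
          a + (N + (k + 1) * (a + d) + d * (k + 1).choose 2) := by
        rw [choose_eq]
        ring
      obtain ⟨S, hS, hSl⟩ := ih N (a + d)
      obtain ⟨T, hT, hTl⟩ : ∃ T : Finset (List ℕ),
          N ^ (k + 1) ≤ #T * ((k + 2)! * (k + 1)!) + (k + 1) * (k + 2) * N ^ k ∧
          ∀ l ∈ T, IsGapList d (a + 1) (a + (N + (k + 1) * (a + d) + d * (k + 1).choose 2)) l := by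
        rcases lt_or_ge N (k + 2) with hN | hN
        · refine ⟨∅, ?_, by simp⟩
          rw [card_empty, zero_mul, zero_add, pow_succ']
          exact Nat.mul_le_mul_right _ (by nlinarith)
        · obtain ⟨N', rfl⟩ := Nat.exists_eq_add_of_le' hN
          obtain ⟨T, hT, hTl⟩ := ihN N' (by lia) (a + 1)
          refine ⟨T, (add_pow_succ_le N' (k + 2) k).trans (Nat.add_le_add_right hT _), ?_⟩
          rwa [← sum_eq, show N' + (k + 2) + (k + 1 + 1) * a = N' + (k + 1 + 1) * (a + 1) by ring]
      rw [sum_eq]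
      exact exists_pow_succ_le_card_mul hSl hS hTl hT

theorem card_le_gapCount {S : Finset (List ℕ)} (hS : ∀ l ∈ S, IsGapList d a n l)
    (hS0 : ∀ l ∈ S, 0 ∉ l) : #S ≤ gapCount d a n := by
  rw [gapCount, ← Nat.card_eq_finsetCard S]
  let toPartition (l : S) : {p : n.Partition // (∀ x ∈ p.parts, a ≤ x) ∧
      List.IsChain (fun x y => x + d ≤ y) (p.parts.sort (· ≤ ·))} :=
    ⟨⟨l.1, fun hi => Nat.pos_of_ne_zero (ne_of_mem_of_not_mem hi (hS0 l.1 l.2)),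
      (hS l.1 l.2).sum_eq⟩, (hS l.1 l.2).le_of_mem,
      by simpa only [(hS l.1 l.2).sort_eq] using (hS l.1 l.2).isChain⟩
  refine Nat.card_le_card_of_injective toPartition fun l l' h => Subtype.ext ?_
  have parts_eq : (l.1 : Multiset ℕ) = l'.1 := congrArg (fun p => p.1.parts) h
  rw [← (hS l.1 l.2).sort_eq, parts_eq, (hS l'.1 l'.2).sort_eq]

end IsGapList

theorem pow_le_gapCount_mul (d a N k : ℕ) :
    N ^ k ≤ gapCount d a (N + (k + 1) * (a + 1) + d * (k + 1).choose 2) * ((k + 1)! * k !) := by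
  obtain ⟨S, hS, hSl⟩ := IsGapList.exists_pow_le_card_mul d k N (a + 1)
  exact hS.trans (Nat.mul_le_mul_right _ (IsGapList.card_le_gapCount
    (fun l hl => (hSl l hl).mono a.le_succ)
    fun l hl h0 => Nat.not_succ_le_zero a ((hSl l hl).le_of_mem 0 h0)))

theorem log_factorial_succ_le (n : ℕ) :
    log (n + 1)! ≤ (n + 1) * (log (n + 1) - 1) + log (n + 1) / 2 + 1 := by
  have h := Stirling.log_stirlingSeq'_antitone n.zero_le
  simp only [Function.comp_apply, Nat.succ_eq_add_one, zero_add, Stirling.log_stirlingSeq_formula,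
    Nat.factorial_one, Nat.cast_one, Nat.cast_add, log_one, mul_one, one_mul] at h
  rw [log_div (by positivity) (by positivity), log_div one_ne_zero (by positivity),
    log_mul two_ne_zero (by positivity), log_exp, log_one] at h
  linarith

theorem factorial_succ_mul_factorial_le (k : ℕ) :
    ((k + 1)! * k ! : ℝ) ≤ exp (2 * ((k + 1) * (log (k + 1) - 1) + 1)) := by
  have log_factorial : log (k + 1)! = log (k + 1) + log k ! := by
    rw [Nat.factorial_succ, Nat.cast_mul, log_mul (by positivity) (by positivity), Nat.cast_succ]
  rw [← log_le_iff_le_exp (by positivity), log_mul (by positivity) (by positivity)]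
  linarith [log_factorial_succ_le k]

theorem exists_eq_add_of_excess_pos {d a n k : ℕ} {D : ℝ} (hD0 : 0 < D)
    (hD : D = n / (k + 1) ^ 2 - (a + 1) / (k + 1) - d / 2) :
    ∃ N : ℕ, n = N + (k + 1) * (a + 1) + d * (k + 1).choose 2 ∧ D * (k + 1) ^ 2 ≤ N := by
  have n_eq : (n : ℝ) = D * (k + 1) ^ 2 + (k + 1) * (a + 1) + d * ((k + 1) ^ 2 / 2) := by
    rw [hD]
    field_simp
    ring
  have choose_le : ((k + 1).choose 2 : ℝ) ≤ (k + 1) ^ 2 / 2 := by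
    rw [Nat.cast_choose_two, Nat.cast_succ]
    nlinarith
  have le_n : D * (k + 1) ^ 2 + ((k + 1) * (a + 1) + d * (k + 1).choose 2 : ℕ) ≤ n := by
    push_cast
    rw [n_eq, add_assoc]
    gcongr
  have excess_le : D * (k + 1) ^ 2 ≤ n - ((k + 1) * (a + 1) + d * (k + 1).choose 2 : ℕ) :=
    le_sub_iff_add_le.2 le_n
  have least_sum_le : (k + 1) * (a + 1) + d * (k + 1).choose 2 ≤ n :=
    Nat.cast_le.1 (sub_nonneg.1 ((by positivity : 0 ≤ D * (k + 1) ^ 2).trans excess_le))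
  refine ⟨n - ((k + 1) * (a + 1) + d * (k + 1).choose 2), by lia, ?_⟩
  rwa [Nat.cast_sub least_sum_le]

theorem exp_le_gapCount {d a n K : ℕ} (hK : 0 < K)
    (hD : 0 < (n : ℝ) / K ^ 2 - (a + 1) / K - d / 2) :
    exp (K * (2 + log (n / K ^ 2 - (a + 1) / K - d / 2)) - log n - 2) ≤ gapCount d a n := by
  obtain ⟨k, rfl⟩ := Nat.exists_eq_add_one.2 hK
  rw [Nat.cast_succ] at hD ⊢
  obtain ⟨D, hD_def⟩ : ∃ D : ℝ, D = n / (k + 1) ^ 2 - (a + 1) / (k + 1) - d / 2 := ⟨_, rfl⟩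
  rw [← hD_def] at hD ⊢
  obtain ⟨N, hn, hN⟩ := exists_eq_add_of_excess_pos hD hD_def
  have n_pos : (0 : ℝ) < n := by
    rw [hn]
    positivity
  have N_le_n : (N : ℝ) ≤ n := Nat.cast_le.2 (by lia)
  have exponent_eq : (k + 1) * (2 + log D) - log n - 2 =
      (k + 1 : ℕ) * log (D * (k + 1) ^ 2) - log n - 2 * ((k + 1) * (log (k + 1) - 1) + 1) := by
    rw [log_mul hD.ne' (by positivity), log_pow]
    push_cast
    ring
  calc exp ((k + 1) * (2 + log D) - log n - 2)
      = (D * (k + 1) ^ 2) ^ (k + 1) / n / exp (2 * ((k + 1) * (log (k + 1) - 1) + 1)) := by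
        rw [exponent_eq, exp_sub, exp_sub, exp_log n_pos, exp_nat_mul, exp_log (by positivity)]
    _ ≤ (N : ℝ) ^ k / exp (2 * ((k + 1) * (log (k + 1) - 1) + 1)) := by
        gcongr
        rw [div_le_iff₀ n_pos]
        calc (D * (k + 1) ^ 2) ^ (k + 1) ≤ (N : ℝ) ^ (k + 1) := by gcongr
          _ ≤ N ^ k * n := by
            rw [pow_succ]
            gcongr
    _ ≤ gapCount d a n := by
        rw [div_le_iff₀ (exp_pos _)]
        calc (N : ℝ) ^ k ≤ gapCount d a n * ((k + 1)! * k !) := by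
              rw [hn]
              exact_mod_cast pow_le_gapCount_mul d a N k
          _ ≤ gapCount d a n * exp (2 * ((k + 1) * (log (k + 1) - 1) + 1)) := by
              gcongr
              exact factorial_succ_mul_factorial_le k

-- `exp_le_gapCount` is used with `⌊κ √n⌋₊` parts.
theorem eventually_exp_le_gapCount {d a : ℕ} {κ ρ : ℝ} (hκ : 0 < κ)
    (hD : 0 < 1 / κ ^ 2 - d / 2) (hρ : ρ < κ * (2 + log (1 / κ ^ 2 - d / 2))) :
    ∀ᶠ n : ℕ in atTop, exp (ρ * √n) ≤ gapCount d a n := by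
  let K (s : ℝ) : ℕ := ⌊κ * s⌋₊
  let D (s : ℝ) : ℝ := s ^ 2 / K s ^ 2 - (a + 1) / K s - d / 2
  have K_atTop : Tendsto K atTop atTop :=
    tendsto_nat_floor_atTop.comp (tendsto_id.const_mul_atTop hκ)
  have K_div : Tendsto (fun s => (K s : ℝ) / s) atTop (𝓝 κ) :=
    tendsto_nat_floor_mul_div_atTop hκ.le
  have D_lim : Tendsto D atTop (𝓝 (1 / κ ^ 2 - d / 2)) := by
    have inv_lim := (tendsto_natCast_atTop_atTop.comp K_atTop).const_div_atTop ((a : ℝ) + 1)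
    simpa [D, div_pow] using ((K_div.inv₀ hκ.ne').pow 2).sub inv_lim |>.sub_const ((d : ℝ) / 2)
  have log_div : Tendsto (fun s : ℝ => log (s ^ 2) / s) atTop (𝓝 0) := by
    simpa [mul_div_assoc] using isLittleO_log_id_atTop.tendsto_div_nhds_zero.const_mul 2
  have exponent_lim : Tendsto
      (fun s => K s / s * (2 + log (D s)) - log (s ^ 2) / s - 2 / s) atTop
      (𝓝 (κ * (2 + log (1 / κ ^ 2 - d / 2)))) := by
    simpa using (((K_div.mul ((D_lim.log hD.ne').const_add 2)).sub log_div).sub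
      (tendsto_id.const_div_atTop 2))
  filter_upwards [tendsto_sqrt_natCast_atTop.eventually ((exponent_lim.eventually_const_lt hρ).and
    ((D_lim.eventually_const_lt hD).and ((K_atTop.eventually_gt_atTop 0).and
      (eventually_gt_atTop 0))))] with n ⟨rate_lt, D_pos, K_pos, sqrt_pos⟩
  have sq_sqrt_n : √(n : ℝ) ^ 2 = n := sq_sqrt n.cast_nonneg
  simp only [D, sq_sqrt_n] at rate_lt D_pos
  refine le_trans (exp_le_exp.2 ?_) (exp_le_gapCount K_pos D_pos)
  have := (mul_lt_mul_of_pos_right rate_lt sqrt_pos).le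
  rwa [sub_mul, sub_mul, mul_right_comm, div_mul_cancel₀ _ sqrt_pos.ne',
    div_mul_cancel₀ _ sqrt_pos.ne', div_mul_cancel₀ _ sqrt_pos.ne'] at this

-- The choice `κ = √(2 / (3 * d))` does not maximise the rate of `eventually_exp_le_gapCount`, but
-- it makes `1 / κ ^ 2 - d / 2` equal to `d`.
theorem eventually_exp_le_gapCount_of_lt {d : ℕ} (a : ℕ) (hd : 0 < d) {ρ : ℝ}
    (hρ : ρ < √(2 / (3 * d)) * (2 + log d)) :
    ∀ᶠ n : ℕ in atTop, exp (ρ * √n) ≤ gapCount d a n := by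
  have hd' : (0 : ℝ) < d := Nat.cast_pos.2 hd
  have excess : 1 / √(2 / (3 * d)) ^ 2 - (d : ℝ) / 2 = d := by
    rw [sq_sqrt (by positivity)]
    field_simp
    ring
  exact eventually_exp_le_gapCount (κ := √(2 / (3 * d))) (by positivity) (by rwa [excess])
    (by rwa [excess])

-- A Padé bound for `log (x / 4)`, with `1.386 < log 4`.
theorem two_mul_sub_div_le_log {x : ℝ} (hx : 4 ≤ x) :
    1.386 + 2 * (x - 4) / (x + 4) ≤ log x := by
  have h := le_log_one_add_of_nonneg (show 0 ≤ x / 4 - 1 by linarith)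
  have log_four : log 4 = 2 * log 2 := by
    rw [show (4 : ℝ) = 2 ^ 2 by norm_num, log_pow, Nat.cast_ofNat]
  have eq : 2 * (x / 4 - 1) / (x / 4 - 1 + 2) = 2 * (x - 4) / (x + 4) := by
    rw [show x / 4 - 1 + 2 = (x + 4) / 4 by ring]
    field_simp
  rw [add_sub_cancel, log_div (by positivity) (by norm_num), eq] at h
  linarith [log_two_gt_d9]

theorem two_mul_pi_sq_mul_lt {x : ℝ} (hx : 4 ≤ x) :
    2 * π ^ 2 * x < (x + 3) * (2 + log x) ^ 2 := by
  have pi_sq_lt : 2 * π ^ 2 < 19.74 := by nlinarith [pi_lt_d4, pi_pos]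
  have cubic : 19.74 * x * (x + 4) ^ 2 ≤ (x + 3) * (5.386 * x + 5.544) ^ 2 := by
    obtain ⟨y, hy, rfl⟩ : ∃ y, 0 ≤ y ∧ x = y + 4 := ⟨x - 4, by linarith, by ring⟩
    rw [← sub_nonneg]
    ring_nf
    positivity
  calc 2 * π ^ 2 * x < 19.74 * x := by gcongr
    _ = 19.74 * x * (x + 4) ^ 2 / (x + 4) ^ 2 := by field_simp
    _ ≤ (x + 3) * (5.386 * x + 5.544) ^ 2 / (x + 4) ^ 2 := by gcongr
    _ = (x + 3) * (2 + (1.386 + 2 * (x - 4) / (x + 4))) ^ 2 := by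
        field_simp
        ring
    _ ≤ (x + 3) * (2 + log x) ^ 2 := by
        have : 0 ≤ 2 * (x - 4) / (x + 4) := div_nonneg (by linarith) (by linarith)
        gcongr
        exact two_mul_sub_div_le_log hx

theorem two_mul_pi_div_sqrt_lt {x : ℝ} (hx : 4 ≤ x) :
    2 * (π / √(3 * (x + 3))) < √(2 / (3 * x)) * (2 + log x) := by
  have log_nonneg : 0 ≤ log x := log_nonneg (by linarith)
  refine lt_of_pow_lt_pow_left₀ 2 (by positivity) ?_
  rw [mul_pow, div_pow, mul_pow, sq_sqrt (by positivity), sq_sqrt (by positivity)]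
  calc 2 ^ 2 * (π ^ 2 / (3 * (x + 3))) = 2 * π ^ 2 * x * (2 / (3 * x * (x + 3))) := by field_simp
    _ < (x + 3) * (2 + log x) ^ 2 * (2 / (3 * x * (x + 3))) := by
      exact mul_lt_mul_of_pos_right (two_mul_pi_sq_mul_lt hx) (by positivity)
    _ = 2 / (3 * x) * (2 + log x) ^ 2 := by field_simp

theorem tendsto_exp_mul_sub_exp_mul_atTop {ρ σ : ℝ} (hρ : 0 < ρ) (h : ρ < σ) :
    Tendsto (fun s => exp (σ * s) - exp (ρ * s)) atTop atTop := by
  have factor (s : ℝ) : exp (σ * s) - exp (ρ * s) = exp (ρ * s) * (exp ((σ - ρ) * s) - 1) := by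
    rw [mul_sub_one, ← exp_add]
    ring_nf
  simp only [factor]
  have exp_lim {c : ℝ} (hc : 0 < c) : Tendsto (fun s => exp (c * s)) atTop atTop :=
    tendsto_exp_atTop.comp (tendsto_id.const_mul_atTop hc)
  exact (exp_lim hρ).atTop_mul_atTop₀ (tendsto_atTop_add_const_right _ (-1) (exp_lim (sub_pos.2 h)))

theorem stmt18_general (a d : ℕ) (hd : 4 ≤ d) :
    ∀ M : ℕ, ∃ N : ℕ, ∀ n, N ≤ n → congCount d a n + M ≤ gapCount d a n := by
  intro M
  obtain ⟨ρ, hβρ, hρ⟩ := exists_between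
    (two_mul_pi_div_sqrt_lt (x := d) (Nat.ofNat_le_cast.2 hd))
  obtain ⟨σ, hρσ, hσ⟩ := exists_between hρ
  have hρ0 : 0 < ρ := lt_trans (by positivity) hβρ
  have diff_ge := (tendsto_exp_mul_sub_exp_mul_atTop hρ0 hρσ).comp tendsto_sqrt_natCast_atTop
    |>.eventually_ge_atTop (M : ℝ)
  refine eventually_atTop.1 ?_
  filter_upwards [eventually_congCount_le d a hβρ,
    eventually_exp_le_gapCount_of_lt a (by lia) hσ, diff_ge] with n upper lower diff
  have : (congCount d a n + M : ℝ) ≤ gapCount d a n := by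
    linarith [show (M : ℝ) ≤ exp (σ * √n) - exp (ρ * √n) from diff]
  exact_mod_cast this

theorem stmt18 (a d : ℕ) (ha : 1 ≤ a) (hd : 4 ≤ d) (had : a < d + 3)
    (hgcd : Nat.gcd a (d + 3) = 1) :
    ∀ M : ℕ, ∃ N : ℕ, ∀ n, N ≤ n → congCount d a n + M ≤ gapCount d a n :=
  stmt18_general a d hd
end
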